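/- arXiv:1212.1392 — 4 statements merged into one kernel-verified Lean document; each statement's English description precedes it below -/
import Mathlib

section
/- Let p be a prime number greater than 3. Then p divides neither the class number h(ℚ(√(1 − p))) nor the class number h(ℚ(√(4 − p))). -/
/-!
Every ideal class of `ℚ(√d)`, `d < 0`, contains an ideal `J` which can be divided by an element of
smallest absolute value, so that it becomes a lattice `L ⊆ ℂ` having `1` as a shortest nonzero
vector. As `L` is stable under `ℤ[√d]`, it contains `√d`, and reduction of its basis gives
`L = ℤ + ℤ (√d + b) / a` with `0 ≤ b < a`. Shortness of `1` forces the height `√|d| / a` to be at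
least `√3 / 2`, and there are at most `|d|` pairs `(a, b)` with `b < a` and `3 a² ≤ 4 |d|`. Since
`L` determines the class, the class number is at most `|d|`, which is smaller than `p` in both
cases.
-/

open Complex NumberField
open scoped IntermediateField nonZeroDivisors

section NormalizedLattice

/-- A subgroup of `ℂ` having `1` as a shortest nonzero vector: the normal form of a lattice up to
homothety. Length is measured by `Complex.normSq`, and no finite generation is asked for. -/
structure IsNormalized (L : AddSubgroup ℂ) : Prop where
  one_mem : 1 ∈ L
  one_le_normSq : ∀ x ∈ L, x ≠ 0 → 1 ≤ normSq x

namespace IsNormalized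

variable {L : AddSubgroup ℂ}

lemma intCast_mem (hL : IsNormalized L) (k : ℤ) : (k : ℂ) ∈ L := by
  simpa using L.zsmul_mem hL.one_mem k

lemma exists_eq_intCast_of_im_eq_zero (hL : IsNormalized L) {x : ℂ} (hx : x ∈ L)
    (him : x.im = 0) : ∃ k : ℤ, x = k := by
  refine ⟨⌊x.re⌋, by_contra fun hne => ?_⟩
  have h := hL.one_le_normSq _ (L.sub_mem hx (hL.intCast_mem ⌊x.re⌋)) (sub_ne_zero.2 hne)
  simp only [normSq_apply, sub_re, sub_im, intCast_re, intCast_im, him] at h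
  nlinarith [Int.floor_le x.re, Int.lt_floor_add_one x.re]

lemma three_le_four_mul_im_sq (hL : IsNormalized L) {x : ℂ} (hx : x ∈ L) (him : x.im ≠ 0) :
    3 ≤ 4 * x.im ^ 2 := by
  have hne : x - (round x.re : ℂ) ≠ 0 := fun h => him (by simpa using congrArg Complex.im h)
  have h := hL.one_le_normSq _ (L.sub_mem hx (hL.intCast_mem (round x.re))) hne
  simp only [normSq_apply, sub_re, sub_im, intCast_re, intCast_im, sub_zero] at h
  have hround := abs_le.1 (abs_sub_round x.re)
  nlinarith

lemma exists_forall_im_eq_intCast_mul (hL : IsNormalized L) :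
    ∃ t ∈ L, ∀ x ∈ L, ∃ k : ℤ, x.im = k * t.im := by
  have hgap : Disjoint (L.map imAddGroupHom : Set ℝ) (Set.Ioo 0 (1 / 2)) := by
    rw [Set.disjoint_left]
    rintro _ ⟨x, hx, rfl⟩ ⟨hpos, hlt⟩
    rw [coe_imAddGroupHom] at hpos hlt
    nlinarith [hL.three_le_four_mul_im_sq hx hpos.ne']
  obtain ⟨g, hg⟩ := AddSubgroup.cyclic_of_isolated_zero (by norm_num) hgap
  obtain ⟨t, ht, rfl⟩ : g ∈ L.map imAddGroupHom := hg ▸ AddSubgroup.mem_closure_singleton_self g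
  refine ⟨t, ht, fun x hx => ?_⟩
  have hxim : x.im ∈ L.map imAddGroupHom := ⟨x, hx, rfl⟩
  rw [hg, AddSubgroup.mem_closure_singleton] at hxim
  obtain ⟨k, hk⟩ := hxim
  exact ⟨k, by simpa using hk.symm⟩

lemma exists_im_eq_natCast_mul (hL : IsNormalized L) {z : ℂ} (hz : z ∈ L) :
    ∃ t ∈ L, (∃ a : ℕ, z.im = a * t.im) ∧ ∀ x ∈ L, ∃ k : ℤ, x.im = k * t.im := by
  obtain ⟨t, ht, hgen⟩ := hL.exists_forall_im_eq_intCast_mul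
  obtain ⟨k, hk⟩ := hgen z hz
  obtain ⟨a, rfl | rfl⟩ := k.eq_nat_or_neg
  · exact ⟨t, ht, ⟨a, by simpa using hk⟩, hgen⟩
  · refine ⟨-t, L.neg_mem ht, ⟨a, by simpa using hk⟩, fun x hx => ?_⟩
    obtain ⟨l, hl⟩ := hgen x hx
    exact ⟨-l, by simpa using hl⟩

lemma eq_closure_one_pair (hL : IsNormalized L) {t : ℂ} (ht : t ∈ L)
    (hgen : ∀ x ∈ L, ∃ k : ℤ, x.im = k * t.im) : L = AddSubgroup.closure {1, t} := by
  refine le_antisymm (fun x hx => ?_) ?_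
  · obtain ⟨v, hv⟩ := hgen x hx
    obtain ⟨u, hu⟩ := hL.exists_eq_intCast_of_im_eq_zero (L.sub_mem hx (L.zsmul_mem ht v))
      (by simp [hv])
    refine AddSubgroup.mem_closure_pair.2 ⟨u, v, ?_⟩
    rw [zsmul_one, ← hu, sub_add_cancel]
  · simpa [Set.insert_subset_iff] using ⟨hL.one_mem, ht⟩

end IsNormalized

/-- The lattice `ℤ + ℤ (z + b) / a`, where `q` is the pair `⟨a, b⟩`. -/
noncomputable def reducedLattice (z : ℂ) (q : Σ _ : ℕ, ℕ) : AddSubgroup ℂ :=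
  AddSubgroup.closure {1, (z + q.2) / q.1}

lemma IsNormalized.exists_eq_reducedLattice {L : AddSubgroup ℂ} (hL : IsNormalized L) {z : ℂ}
    (hz : z ∈ L) (hzim : z.im ≠ 0) :
    ∃ a b : ℕ, b < a ∧ 3 * (a : ℝ) ^ 2 ≤ 4 * z.im ^ 2 ∧ L = reducedLattice z ⟨a, b⟩ := by
  obtain ⟨t, ht, ⟨a, hat⟩, hgen⟩ := hL.exists_im_eq_natCast_mul hz
  obtain ⟨ha, htim⟩ : (a : ℝ) ≠ 0 ∧ t.im ≠ 0 := mul_ne_zero_iff.1 (hat ▸ hzim)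
  have ha0 : (a : ℤ) ≠ 0 := by exact_mod_cast ha
  obtain ⟨c, hc⟩ := hL.exists_eq_intCast_of_im_eq_zero
    (L.sub_mem (L.nsmul_mem ht a) hz) (by simp [hat])
  obtain ⟨b, hb⟩ := Int.eq_ofNat_of_zero_le (Int.emod_nonneg c ha0)
  have hba : b < a := by
    have := Int.emod_lt_of_pos c (b := a) (by omega)
    omega
  have hcb : (c : ℂ) = b + a * (c / a : ℤ) := by
    exact_mod_cast (hb ▸ Int.emod_add_mul_ediv c a).symm
  have hτ : (z + b) / a = t - (c / a : ℤ) := by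
    rw [div_eq_iff (by exact_mod_cast ha)]
    rw [nsmul_eq_mul] at hc
    linear_combination -hc - hcb
  have hτL : (z + b) / a ∈ L := hτ ▸ L.sub_mem ht (hL.intCast_mem _)
  have hτim : ((z + b) / a).im = t.im := by simp [hτ]
  refine ⟨a, b, hba, ?_, hL.eq_closure_one_pair hτL (by simpa only [hτim] using hgen)⟩
  calc 3 * (a : ℝ) ^ 2 ≤ 4 * t.im ^ 2 * a ^ 2 := by
        gcongr
        exact hL.three_le_four_mul_im_sq ht htim
    _ = 4 * z.im ^ 2 := by rw [hat]; ring

/-- The pairs `⟨a, b⟩` with `b < a` and `3 a² ≤ 4 n`: they index the normalized lattices containing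
a given `z` with `0 < (Im z)² ≤ n`. -/
def reducedPairs (n : ℕ) : Finset (Σ _ : ℕ, ℕ) :=
  (Finset.range (Nat.sqrt (4 * n / 3) + 1)).sigma Finset.range

lemma mem_reducedPairs {n : ℕ} {q : Σ _ : ℕ, ℕ} :
    q ∈ reducedPairs n ↔ 3 * q.1 ^ 2 ≤ 4 * n ∧ q.2 < q.1 := by
  simp only [reducedPairs, Finset.mem_sigma, Finset.mem_range, Nat.lt_succ_iff, Nat.le_sqrt']
  rw [Nat.le_div_iff_mul_le three_pos, mul_comm]

lemma card_reducedPairs_le (n : ℕ) : (reducedPairs n).card ≤ n := by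
  have hsqrt : 3 * Nat.sqrt (4 * n / 3) ^ 2 ≤ 4 * n := by
    have := Nat.sqrt_le' (4 * n / 3)
    omega
  have hcard : (reducedPairs n).card * 2 =
      (Nat.sqrt (4 * n / 3) + 1) * Nat.sqrt (4 * n / 3) := by
    simpa [reducedPairs, Finset.card_sigma] using
      Finset.sum_range_id_mul_two (Nat.sqrt (4 * n / 3) + 1)
  generalize Nat.sqrt (4 * n / 3) = A at hsqrt hcard
  rcases Nat.lt_or_ge A 2 with hA | hA
  · interval_cases A <;> omega
  · nlinarith

end NormalizedLattice

section ClassGroup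

variable {R : Type*} [CommRing R] {φ : R →+* ℂ}

/-- The homothetic image `α⁻¹ J` of an ideal `J` under an embedding `φ` into `ℂ`. -/
noncomputable def scaledLattice (φ : R →+* ℂ) (J : Ideal R) (α : R) : AddSubgroup ℂ :=
  J.toAddSubgroup.map ((AddMonoidHom.mulRight (φ α)⁻¹).comp φ.toAddMonoidHom)

lemma mem_scaledLattice {J : Ideal R} {α : R} {x : ℂ} :
    x ∈ scaledLattice φ J α ↔ ∃ j ∈ J, φ j / φ α = x := by
  simp [scaledLattice, div_eq_mul_inv]

lemma map_mem_scaledLattice {J : Ideal R} {α : R} (hα : α ∈ J) (hφα : φ α ≠ 0) (ω : R) :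
    φ ω ∈ scaledLattice φ J α :=
  mem_scaledLattice.2 ⟨ω * α, J.mul_mem_left ω hα, by rw [map_mul, mul_div_cancel_right₀ _ hφα]⟩

lemma isNormalized_scaledLattice {J : Ideal R} {α : R} (hα : α ∈ J) (hφα : φ α ≠ 0)
    (hmin : ∀ x ∈ J, x ≠ 0 → normSq (φ α) ≤ normSq (φ x)) :
    IsNormalized (scaledLattice φ J α) where
  one_mem := map_one φ ▸ map_mem_scaledLattice hα hφα 1
  one_le_normSq x hx hx0 := by
    obtain ⟨j, hj, rfl⟩ := mem_scaledLattice.1 hx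
    have hj0 : j ≠ 0 := by
      rintro rfl
      simp at hx0
    rw [map_div₀, one_le_div (normSq_pos.2 hφα)]
    exact hmin j hj hj0

lemma exists_mul_eq_mul_of_scaledLattice_le (hφ : Function.Injective φ) {I J : Ideal R} {α β : R}
    (hα : α ≠ 0) (hβ : β ≠ 0) (h : scaledLattice φ I α ≤ scaledLattice φ J β) :
    ∀ i ∈ I, ∃ j ∈ J, β * i = α * j := by
  intro i hi
  obtain ⟨j, hj, hij⟩ := mem_scaledLattice.1 (h (mem_scaledLattice.2 ⟨i, hi, rfl⟩))
  have hα' : φ α ≠ 0 := (map_ne_zero_iff φ hφ).2 hα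
  have hβ' : φ β ≠ 0 := (map_ne_zero_iff φ hφ).2 hβ
  refine ⟨j, hj, hφ ?_⟩
  rw [div_eq_div_iff hβ' hα'] at hij
  rw [map_mul, map_mul]
  linear_combination -hij

lemma mk0_eq_mk0_of_scaledLattice_eq [IsDedekindDomain R] (hφ : Function.Injective φ)
    {I J : (Ideal R)⁰} {α β : R} (hα : α ≠ 0) (hβ : β ≠ 0)
    (h : scaledLattice φ I α = scaledLattice φ J β) :
    ClassGroup.mk0 I = ClassGroup.mk0 J :=
  ClassGroup.mk0_eq_mk0_iff.2 ⟨β, α, hβ, hα, le_antisymm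
    (Ideal.span_singleton_mul_le_span_singleton_mul.2
      (exists_mul_eq_mul_of_scaledLattice_le hφ hα hβ h.le))
    (Ideal.span_singleton_mul_le_span_singleton_mul.2
      (exists_mul_eq_mul_of_scaledLattice_le hφ hβ hα h.ge))⟩

lemma exists_mem_forall_normSq_le (hnorm : ∀ x, ∃ m : ℕ, normSq (φ x) = m) {J : Ideal R}
    (hJ : J ≠ ⊥) : ∃ α ∈ J, α ≠ 0 ∧ ∀ x ∈ J, x ≠ 0 → normSq (φ α) ≤ normSq (φ x) := by
  choose N hN using hnorm
  obtain ⟨y, hy, hy0⟩ := Submodule.exists_mem_ne_zero_of_ne_bot hJ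
  have hne : {x | x ∈ J ∧ x ≠ 0}.Nonempty := ⟨y, hy, hy0⟩
  obtain ⟨hα, hα0⟩ := Function.argminOn_mem N _ hne
  refine ⟨_, hα, hα0, fun x hx hx0 => ?_⟩
  rw [hN, hN]
  exact_mod_cast Function.argminOn_le N _ (show x ∈ {x | x ∈ J ∧ x ≠ 0} from ⟨hx, hx0⟩)

lemma exists_scaledLattice_eq_reducedLattice (hφ : Function.Injective φ)
    (hnorm : ∀ x, ∃ m : ℕ, normSq (φ x) = m) {ω : R} (hω : (φ ω).im ≠ 0) {n : ℕ}
    (hn : (φ ω).im ^ 2 ≤ n) {J : Ideal R} (hJ : J ≠ ⊥) :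
    ∃ α ≠ 0, ∃ q ∈ reducedPairs n, scaledLattice φ J α = reducedLattice (φ ω) q := by
  obtain ⟨α, hα, hα0, hmin⟩ := exists_mem_forall_normSq_le hnorm hJ
  have hφα : φ α ≠ 0 := (map_ne_zero_iff φ hφ).2 hα0
  obtain ⟨a, b, hba, ha, hL⟩ := (isNormalized_scaledLattice hα hφα hmin).exists_eq_reducedLattice
    (map_mem_scaledLattice hα hφα ω) hω
  have han : 3 * (a : ℝ) ^ 2 ≤ 4 * n := by linarith
  exact ⟨α, hα0, ⟨a, b⟩, mem_reducedPairs.2 ⟨by exact_mod_cast han, hba⟩, hL⟩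

theorem card_classGroup_le_of_im_sq_le [IsDedekindDomain R] (hφ : Function.Injective φ)
    (hnorm : ∀ x, ∃ m : ℕ, normSq (φ x) = m) {ω : R} (hω : (φ ω).im ≠ 0) {n : ℕ}
    (hn : (φ ω).im ^ 2 ≤ n) : Nat.card (ClassGroup R) ≤ n := by
  choose J hJ using ClassGroup.mk0_surjective (R := R)
  choose α hα q hq hL using fun C : ClassGroup R =>
    exists_scaledLattice_eq_reducedLattice hφ hnorm hω hn (nonZeroDivisors.ne_zero (J C).2)
  have hinj : Function.Injective fun C => (⟨q C, hq C⟩ : reducedPairs n) := by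
    intro C D hCD
    have hqq : q C = q D := congrArg Subtype.val hCD
    rw [← hJ C, ← hJ D]
    exact mk0_eq_mk0_of_scaledLattice_eq hφ (hα C) (hα D) (by rw [hL C, hL D, hqq])
  calc Nat.card (ClassGroup R) ≤ Nat.card (reducedPairs n) := Nat.card_le_card_of_injective _ hinj
    _ = (reducedPairs n).card := by simp
    _ ≤ n := card_reducedPairs_le n

end ClassGroup

section QuadraticField

lemma im_sq_eq_neg_of_sq_eq_ofReal {r : ℝ} (hr : r ≤ 0) {z : ℂ} (hz : z ^ 2 = r) :
    z.im ^ 2 = -r := by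
  have hre : z.re * z.re - z.im * z.im = r := by simpa [pow_two] using congrArg Complex.re hz
  have him : z.re * z.im + z.im * z.re = 0 := by simpa [pow_two] using congrArg Complex.im hz
  rcases mul_eq_zero.1 (show z.re * z.im = 0 by linarith) with hre0 | him0
  · rw [hre0] at hre
    linarith
  · rw [him0] at hre ⊢
    linarith [mul_self_nonneg z.re]

lemma isQuadraticExtension_adjoin_simple_of_sq_eq {F E : Type*} [Field F] [Field E] [Algebra F E]
    {c : F} (hc : ¬ IsSquare c) {z : E} (hz : z ^ 2 = algebraMap F E c) :
    Algebra.IsQuadraticExtension F F⟮z⟯ where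
  finrank_eq_two' := by
    have hirr : Irreducible (Polynomial.X ^ 2 - Polynomial.C c) :=
      (X_pow_sub_C_irreducible_iff_of_prime Nat.prime_two).2 fun b hb => hc ⟨b, by rw [← hb, sq]⟩
    have hmonic := Polynomial.monic_X_pow_sub_C c two_ne_zero
    have hroot : Polynomial.aeval z (Polynomial.X ^ 2 - Polynomial.C c) = 0 := by simp [hz]
    rw [IntermediateField.adjoin.finrank ⟨_, hmonic, hroot⟩,
      ← minpoly.eq_of_irreducible_of_monic hirr hroot hmonic, Polynomial.natDegree_X_pow_sub_C]

variable {K : Type*} [Field K] [NumberField K] [Algebra.IsQuadraticExtension ℚ K]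

lemma card_infinitePlace_eq_one_of_not_isReal {φ : K →+* ℂ}
    (hφ : ¬ ComplexEmbedding.IsReal φ) : Fintype.card (InfinitePlace K) = 1 := by
  have hcomplex : 0 < InfinitePlace.nrComplexPlaces K := by
    classical exact Fintype.card_pos_iff.2 ⟨_, InfinitePlace.isComplex_mk_iff.2 hφ⟩
  have hrank := InfinitePlace.card_add_two_mul_card_eq_rank K
  rw [Algebra.IsQuadraticExtension.finrank_eq_two] at hrank
  rw [InfinitePlace.card_eq_nrRealPlaces_add_nrComplexPlaces]
  omega

lemma normSq_map_eq_abs_norm {φ : K →+* ℂ} (hφ : ¬ ComplexEmbedding.IsReal φ) (x : K) :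
    normSq (φ x) = |Algebra.norm ℚ x| := by
  have := Fintype.card_le_one_iff_subsingleton.1 (card_infinitePlace_eq_one_of_not_isReal hφ).le
  rw [← InfinitePlace.prod_eq_abs_norm, Fintype.prod_subsingleton _ (InfinitePlace.mk φ),
    InfinitePlace.mult_isComplex ⟨_, InfinitePlace.isComplex_mk_iff.2 hφ⟩, InfinitePlace.apply,
    normSq_eq_norm_sq]

lemma classNumber_le_of_im_sq_le {φ : K →+* ℂ} {ω : 𝓞 K} (hω : (φ ω).im ≠ 0) {n : ℕ}
    (hn : (φ ω).im ^ 2 ≤ n) : classNumber K ≤ n := by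
  have hφ : ¬ ComplexEmbedding.IsReal φ := fun hreal =>
    hω (conj_eq_iff_im.1 (RingHom.congr_fun hreal ω))
  have hnorm (x : 𝓞 K) : ∃ m : ℕ, normSq (φ x) = m := by
    refine ⟨(Algebra.norm ℤ x).natAbs, ?_⟩
    rw [normSq_map_eq_abs_norm hφ, ← Algebra.coe_norm_int]
    simp [Nat.cast_natAbs]
  rw [classNumber, ← Nat.card_eq_fintype_card]
  exact card_classGroup_le_of_im_sq_le (φ := φ.comp (algebraMap (𝓞 K) K))
    (φ.injective.comp RingOfIntegers.coe_injective) hnorm hω hn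

theorem classNumber_le_natAbs_of_sq_eq {d : ℤ} (hd : d < 0) {ω : K} (hω : ω ^ 2 = d) :
    classNumber K ≤ d.natAbs := by
  have hint : IsIntegral ℤ ω :=
    IsIntegral.of_pow two_pos (hω ▸ isIntegral_algebraMap (x := d))
  obtain ⟨φ⟩ : Nonempty (K →+* ℂ) := inferInstance
  have him : (φ ω).im ^ 2 = d.natAbs := by
    have hφω : φ ω ^ 2 = (d : ℝ) := by rw [← map_pow, hω, map_intCast, ofReal_intCast]
    rw [im_sq_eq_neg_of_sq_eq_ofReal (by exact_mod_cast hd.le) hφω, Nat.cast_natAbs,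
      abs_of_neg hd, Int.cast_neg]
  have him0 : (φ ω).im ≠ 0 := by
    rw [← sq_pos_iff, him]
    exact_mod_cast Int.natAbs_pos.2 hd.ne
  exact classNumber_le_of_im_sq_le (φ := φ) (ω := ⟨ω, hint⟩) him0 him.le

end QuadraticField

theorem stmt_1_general {d : ℤ} (hd : d < 0) {m : ℕ} (hm : d.natAbs < m) {z : ℂ} (hz : z ^ 2 = d)
    [NumberField ℚ⟮z⟯] : ¬ m ∣ classNumber ℚ⟮z⟯ := by
  have hd' : ¬ IsSquare (d : ℚ) := fun h => absurd h.nonneg (by exact_mod_cast not_le.2 hd)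
  have : Algebra.IsQuadraticExtension ℚ ℚ⟮z⟯ := by
    -- `convert!` identifies the two `ℚ`-algebra structures, from characteristic zero and from `ℂ`.
    convert! isQuadraticExtension_adjoin_simple_of_sq_eq hd' (z := z) (by simpa using hz)
  have hle : classNumber ℚ⟮z⟯ ≤ d.natAbs :=
    classNumber_le_natAbs_of_sq_eq hd (ω := IntermediateField.AdjoinSimple.gen ℚ z)
      (by ext; simpa using hz)
  exact Nat.not_dvd_of_pos_of_lt Fintype.card_pos (hle.trans_lt hm)

/-- Let `p` be a prime number greater than `3`. Then `p` divides neither the class number of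
`ℚ(√(1 − p))` nor the class number of `ℚ(√(4 − p))`. -/
theorem stmt_1 (p : ℕ) (hp : p.Prime) (h3 : 3 < p)
    (z1 z2 : ℂ) (hz1 : z1 ^ 2 = 1 - (p : ℂ)) (hz2 : z2 ^ 2 = 4 - (p : ℂ))
    (K1 K2 : IntermediateField ℚ ℂ)
    (hK1 : K1 = IntermediateField.adjoin ℚ {z1})
    (hK2 : K2 = IntermediateField.adjoin ℚ {z2})
    [NumberField K1] [NumberField K2] :
    ¬ (p ∣ NumberField.classNumber K1) ∧ ¬ (p ∣ NumberField.classNumber K2) := by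
  have hp4 : p ≠ 4 := fun h => absurd (h ▸ hp) (by norm_num)
  subst hK1 hK2
  exact ⟨stmt_1_general (d := 1 - p) (by omega) (by omega) (by simpa using hz1),
    stmt_1_general (d := 4 - p) (by omega) (by omega) (by simpa using hz2)⟩
end

section
/- Let p be an odd prime number. If n1 and n2 are integers greater than 8 such that ℚ(√(1 − 4p^{n1})) = ℚ(√(1 − 4p^{n2})) (equivalently, the squarefree parts of 1 − 4p^{n1} and 1 − 4p^{n2} coincide), then n1 = n2. -/
/-
Write `1 - 4 p ^ m = D a ^ 2` and `1 - 4 p ^ n = D b ^ 2`. In the quadratic order of discriminant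
`D`, the elements `(1 + a √D) / 2` and `(1 + b √D) / 2` have trace `1` and norms `p ^ m` and
`p ^ n`. Since `D` is a square in `ℤ_[p]`, the order maps to `ℤ_[p]`, and up to conjugation both
elements reduce to `1` modulo `p`. An element with this reduction whose norm is a power of `p` is
determined by its norm, because the unit `1` alone reduces to `1`. The Euclidean algorithm on
exponents therefore writes both elements as powers `γ ^ i` and `γ ^ j` with `i` and `j` coprime.
One of `i`, `j` is odd, so `trace γ` divides `1`, and in fact `trace γ = 1`. Now
`γ ^ i + (1 - γ) ^ i = 1` in `ℤ_[p]`, and lifting the exponent forces `i = 1`; likewise `j = 1`.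
-/

section Fields

open scoped IntermediateField

variable {F E : Type*} [Field F] [Field E] [Algebra F E]

theorem exists_add_mul_of_mem_adjoin_simple_of_sq_eq {z w : E} {M : F}
    (hz : z ^ 2 = algebraMap F E M) (hw : w ∈ F⟮z⟯) :
    ∃ u v : F, w = algebraMap F E u + algebraMap F E v * z := by
  have hint : IsIntegral F z := .of_pow two_pos (hz ▸ isIntegral_algebraMap)
  rw [← IntermediateField.mem_toSubalgebra,
    IntermediateField.adjoin_simple_toSubalgebra_of_isAlgebraic hint.isAlgebraic] at hw
  induction hw using Algebra.adjoin_induction with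
  | mem x hx => exact ⟨0, 1, by simpa using hx⟩
  | algebraMap r => exact ⟨r, 0, by simp⟩
  | add x y _ _ hx hy =>
    obtain ⟨a, b, rfl⟩ := hx
    obtain ⟨c, d, rfl⟩ := hy
    exact ⟨a + c, b + d, by simp only [map_add]; ring⟩
  | mul x y _ _ hx hy =>
    obtain ⟨a, b, rfl⟩ := hx
    obtain ⟨c, d, rfl⟩ := hy
    refine ⟨a * c + b * d * M, a * d + b * c, ?_⟩
    simp only [map_add, map_mul]
    linear_combination (algebraMap F E b * algebraMap F E d) * hz

theorem exists_eq_sq_mul_of_mem_adjoin_simple [NeZero (2 : F)] {z w : E} {M N : F}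
    (hz : z ^ 2 = algebraMap F E M) (hw : w ^ 2 = algebraMap F E N) (hN : ¬ IsSquare N)
    (hwz : w ∈ F⟮z⟯) : ∃ v : F, N = v ^ 2 * M := by
  have w_irrational (t : F) : w ≠ algebraMap F E t := by
    rintro rfl
    exact hN ⟨t, (algebraMap F E).injective (by rw [← hw, map_mul, sq])⟩
  obtain ⟨u, v, rfl⟩ := exists_add_mul_of_mem_adjoin_simple_of_sq_eq hz hwz
  have hv : v ≠ 0 := by
    rintro rfl
    exact w_irrational u (by simp)
  have hu : u = 0 := by
    by_contra hu
    have h2uv : 2 * u * v ≠ 0 := mul_ne_zero (mul_ne_zero two_ne_zero hu) hv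
    have hz_eq : z = algebraMap F E ((N - u ^ 2 - v ^ 2 * M) / (2 * u * v)) := by
      rw [map_div₀, eq_div_iff ((map_ne_zero _).2 h2uv)]
      simp only [map_sub, map_mul, map_pow, map_ofNat]
      linear_combination hw - algebraMap F E v ^ 2 * hz
    exact w_irrational (u + v * ((N - u ^ 2 - v ^ 2 * M) / (2 * u * v)))
      (by rw [map_add, map_mul, ← hz_eq])
  refine ⟨v, (algebraMap F E).injective ?_⟩
  rw [← hw, hu, map_mul, map_pow, ← hz]
  simp only [map_zero]
  ring

theorem exists_common_mul_sq {A K : Type*} [CommRing A] [IsDomain A] [UniqueFactorizationMonoid A]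
    [Field K] [Algebra A K] [IsFractionRing A K] {M N : A} {v : K}
    (h : algebraMap A K N = v ^ 2 * algebraMap A K M) :
    ∃ D a b : A, M = D * a ^ 2 ∧ N = D * b ^ 2 := by
  set r := IsFractionRing.num A v
  set s : A := (IsFractionRing.den A v : A)
  have hs : s ≠ 0 := nonZeroDivisors.coe_ne_zero _
  have hs' : algebraMap A K s ≠ 0 := (map_ne_zero_iff _ (IsFractionRing.injective A K)).2 hs
  have hv : v = algebraMap A K r / algebraMap A K s := (IsFractionRing.mk'_num_den' A v).symm
  have hcross : N * s ^ 2 = r ^ 2 * M := by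
    apply IsFractionRing.injective A K
    rw [map_mul, map_mul, map_pow, map_pow, h, hv]
    field_simp
  obtain ⟨D, hD⟩ : s ^ 2 ∣ M :=
    (IsFractionRing.num_den_reduced A v).symm.pow.dvd_of_dvd_mul_left (Dvd.intro_left N hcross)
  refine ⟨D, s, r, by rw [hD, mul_comm], mul_right_cancel₀ (pow_ne_zero 2 hs) ?_⟩
  rw [hcross, hD]
  ring

end Fields

section LiftingTheExponent

variable {R : Type*} [CommRing R] [IsDomain R] {p : ℕ}

theorem emultiplicity_natCast_pow_sub_pow (hp : p.Prime) (hpR : Prime (p : R)) (hodd : Odd p)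
    {x y : R} (hxy : (p : R) ∣ x - y) (hx : ¬ (p : R) ∣ x) (n : ℕ) :
    emultiplicity (p : R) (x ^ n - y ^ n) = emultiplicity (p : R) (x - y) + emultiplicity p n := by
  rcases eq_or_ne n 0 with rfl | hn
  · simp
  obtain ⟨a, m, hm, rfl⟩ := Nat.exists_eq_pow_mul_and_not_dvd hn p hp.ne_one
  have hmR : ¬ (p : R) ∣ m := fun h => by
    have hcop := (hp.coprime_iff_not_dvd.2 hm).isCoprime.map (Int.castRingHom R)
    exact hpR.not_isUnit (hcop.isUnit_of_dvd' (by simp) (by simpa using h))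
  have hfactor : emultiplicity p (p ^ a * m) = a := by
    rw [emultiplicity_mul hp.prime, hp.emultiplicity_pow_self, emultiplicity_eq_zero.2 hm, add_zero]
  rw [hfactor, pow_mul, pow_mul, emultiplicity_pow_sub_pow_of_prime hpR
    (hxy.trans (sub_dvd_pow_sub_pow x y _)) (fun h => hx (hpR.dvd_of_dvd_pow h)) hmR,
    emultiplicity_pow_prime_pow_sub_pow_prime_pow hpR hodd hxy hx]

theorem emultiplicity_lt_sub_one {i : ℕ} (hp : 2 < p) (hi : 1 < i) :
    emultiplicity p i < (i - 1 : ℕ) := by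
  rw [emultiplicity_lt_iff_not_dvd]
  intro h
  have hle : p ^ (i - 1) ≤ i := Nat.le_of_dvd (by omega) h
  have hlt : 2 ^ (i - 1) < p ^ (i - 1) := Nat.pow_lt_pow_left hp (by omega)
  have : i - 1 < 2 ^ (i - 1) := Nat.lt_two_pow_self
  omega

theorem eq_one_of_pow_add_pow_eq_one (hp : p.Prime) (hpR : Prime (p : R)) (hodd : Odd p)
    {c d : R} (hd : (p : R) ∣ d) (hfin : FiniteMultiplicity (p : R) d) (hadd : c + d = 1) {i : ℕ}
    (hi : i ≠ 0) (hpow : c ^ i + d ^ i = 1) : i = 1 := by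
  have hd_eq : 1 - c = d := by rw [← hadd, add_sub_cancel_left]
  have hdi_eq : 1 ^ i - c ^ i = d ^ i := by rw [one_pow, ← hpow, add_sub_cancel_left]
  have hlte := emultiplicity_natCast_pow_sub_pow hp hpR hodd (hd_eq ▸ hd) hpR.not_dvd_one i
  rw [hdi_eq, hd_eq, emultiplicity_pow hpR, hfin.emultiplicity_eq_multiplicity] at hlte
  by_contra hi1
  have hlt := emultiplicity_lt_sub_one
    (hp.two_le.lt_of_ne' (hodd.ne_two_of_dvd_nat dvd_rfl)) (by omega : 1 < i)
  obtain ⟨f, hf⟩ := ENat.ne_top_iff_exists.1 (ne_top_of_lt hlt)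
  rw [← hf] at hlte hlt
  norm_cast at hlte hlt
  have hpos : 1 ≤ multiplicity (p : R) d := multiplicity_pos_of_dvd hd
  obtain ⟨j, rfl⟩ : ∃ j, i = j + 1 := ⟨i - 1, by omega⟩
  rw [Nat.add_sub_cancel] at hlt
  nlinarith

end LiftingTheExponent

section QuadraticAlgebra

open QuadraticAlgebra

variable {R : Type*} [CommRing R] {a b : R}

theorem trace_sq_sub_four_mul_norm (z : QuadraticAlgebra R a b) :
    trace z ^ 2 - 4 * norm z = (b ^ 2 + 4 * a) * z.im ^ 2 := by
  rw [trace_def, norm_def]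
  ring

theorem trace_dvd_trace_pow (z : QuadraticAlgebra R a b) {i : ℕ} (hi : Odd i) :
    trace z ∣ trace (z ^ i) := by
  rw [← algebraMap_dvd_iff_dvd (a := a) (b := b), algebraMap_trace_eq_add_star,
    algebraMap_trace_eq_add_star, star_pow]
  exact hi.add_dvd_pow_add_pow z (star z)

theorem exists_trace_eq_one_norm_eq {a b q s : ℤ} (h : 1 - 4 * q = (b ^ 2 + 4 * a) * s ^ 2) :
    ∃ z : QuadraticAlgebra ℤ a b, trace z = 1 ∧ norm z = q := by
  have hodd : Odd (b * s) := by
    have hsq : Odd ((b * s) ^ 2) := ⟨-2 * q - 2 * a * s ^ 2, by linear_combination -h⟩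
    exact (Int.odd_pow' two_ne_zero).1 hsq
  obtain ⟨t, ht⟩ := hodd
  have htr : trace (⟨-t, s⟩ : QuadraticAlgebra ℤ a b) = 1 := by
    rw [trace_def]
    linear_combination ht
  refine ⟨⟨-t, s⟩, htr, ?_⟩
  have hdiscr := trace_sq_sub_four_mul_norm (⟨-t, s⟩ : QuadraticAlgebra ℤ a b)
  rw [htr] at hdiscr
  linarith

theorem map_add_map_star {S : Type*} [Ring S] {a b : ℤ} (Φ : QuadraticAlgebra ℤ a b →+* S)
    (z : QuadraticAlgebra ℤ a b) : Φ z + Φ (star z) = ((trace z : ℤ) : S) := by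
  rw [← map_add, ← algebraMap_trace_eq_add_star, eq_intCast, map_intCast]

theorem map_mul_map_star {S : Type*} [Ring S] {a b : ℤ} (Φ : QuadraticAlgebra ℤ a b →+* S)
    (z : QuadraticAlgebra ℤ a b) : Φ z * Φ (star z) = ((norm z : ℤ) : S) := by
  rw [← map_mul, ← algebraMap_norm_eq_mul_star, eq_intCast, map_intCast]

theorem nonempty_algHom_of_isSquare {S : Type*} [CommRing S] [Algebra R S] (h2 : IsUnit (2 : S))
    (h : IsSquare (algebraMap R S (b ^ 2 + 4 * a))) :
    Nonempty (QuadraticAlgebra R a b →ₐ[R] S) := by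
  obtain ⟨δ, hδ⟩ := h
  obtain ⟨c, hc⟩ := h2.exists_right_inv
  refine ⟨lift ⟨(algebraMap R S b + δ) * c, ?_⟩⟩
  simp only [map_add, map_mul, map_pow, map_ofNat] at hδ
  simp only [Algebra.smul_def, mul_one]
  linear_combination (-c ^ 2) * hδ +
    (algebraMap R S a * (2 * c + 1) + (algebraMap R S b) * (algebraMap R S b + δ) * c) * hc

end QuadraticAlgebra

section Henselian

open Polynomial

theorem isSquare_of_sub_one_mem {R : Type*} [CommRing R] (I : Ideal R) [HenselianRing R I]
    (h2 : IsUnit (2 : R)) {x : R} (hx : x - 1 ∈ I) : IsSquare x := by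
  obtain ⟨r, hr, -⟩ := HenselianRing.is_henselian (I := I) (X ^ 2 - C x)
    (monic_X_pow_sub_C x two_ne_zero) 1 (by simpa using neg_mem hx)
    (by simpa [one_add_one_eq_two] using h2.map (Ideal.Quotient.mk I))
  refine ⟨r, ?_⟩
  simp only [IsRoot, eval_sub, eval_pow, eval_X, eval_C] at hr
  linear_combination -hr

variable {p : ℕ} [Fact p.Prime]

theorem isUnit_two_padicInt (hodd : Odd p) : IsUnit (2 : ℤ_[p]) := by
  rw [PadicInt.isUnit_iff]
  exact PadicInt.norm_natCast_eq_one_iff.2 hodd.coprime_two_right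

theorem isSquare_intCast_padicInt_of_mul_sq_sub_one (hodd : Odd p) {D s : ℤ}
    (hdvd : (p : ℤ) ∣ D * s ^ 2 - 1) : IsSquare (D : ℤ_[p]) := by
  have hmem : (D : ℤ_[p]) * s ^ 2 - 1 ∈ IsLocalRing.maximalIdeal ℤ_[p] := by
    rw [PadicInt.maximalIdeal_eq_span_p, Ideal.mem_span_singleton]
    exact_mod_cast map_dvd (Int.castRingHom ℤ_[p]) hdvd
  obtain ⟨r, hr⟩ := isSquare_of_sub_one_mem _ (isUnit_two_padicInt hodd) hmem
  have hs : (s : ℤ_[p]) ≠ 0 := by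
    intro h
    rw [h, zero_pow two_ne_zero, mul_zero, zero_sub, neg_mem_iff] at hmem
    exact (Ideal.ne_top_iff_one _).1 (IsLocalRing.maximalIdeal.isMaximal _).ne_top hmem
  obtain ⟨t, rfl⟩ : (s : ℤ_[p]) ∣ r := by
    rw [← IsIntegrallyClosed.pow_dvd_pow_iff two_ne_zero, sq r, ← hr]
    exact dvd_mul_left _ _
  exact ⟨t, mul_right_cancel₀ (pow_ne_zero 2 hs) (by linear_combination hr)⟩

end Henselian

section NormalizedGenerators

open QuadraticAlgebra

variable {p : ℕ} [Fact p.Prime] {a b : ℤ}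

theorem pow_dvd_of_pow_dvd_map {Φ : QuadraticAlgebra ℤ a b →+* ℤ_[p]}
    (hdiscr : ¬ (p : ℤ) ∣ b ^ 2 + 4 * a) {k : ℕ} {z : QuadraticAlgebra ℤ a b}
    (hz : (p : ℤ_[p]) ^ k ∣ Φ z) (hz' : (p : ℤ_[p]) ^ k ∣ Φ (star z)) :
    (p : QuadraticAlgebra ℤ a b) ^ k ∣ z := by
  have him : (p : ℤ) ^ k ∣ z.im := by
    have hsqrt : (z - star z) * (2 * ω - (b : QuadraticAlgebra ℤ a b)) =
        ((z.im * (b ^ 2 + 4 * a) : ℤ) : QuadraticAlgebra ℤ a b) := by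
      ext <;> simp [sq] <;> ring
    refine (Nat.prime_iff_prime_int.1 Fact.out).pow_dvd_of_dvd_mul_right k hdiscr ?_
    rw [← PadicInt.pow_p_dvd_int_iff, ← map_intCast Φ, ← hsqrt, map_mul, map_sub]
    exact (dvd_sub hz hz').mul_right _
  have hre : (p : ℤ) ^ k ∣ z.re := by
    have hz_eq : z = (z.re : QuadraticAlgebra ℤ a b) + (z.im : QuadraticAlgebra ℤ a b) * ω := by
      ext <;> simp
    rw [hz_eq, map_add, map_mul, map_intCast, map_intCast] at hz
    rw [← PadicInt.pow_p_dvd_int_iff] at him ⊢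
    exact (dvd_add_left (him.mul_right _)).1 hz
  obtain ⟨c, hc⟩ := hre
  obtain ⟨d, hd⟩ := him
  refine ⟨⟨c, d⟩, ?_⟩
  rw [← Nat.cast_pow, ← C_natCast, C_mul_eq_smul]
  ext <;> simp [hc, hd]

/-- `x` generates the `k`-th power of one of the two primes above the split prime `p` in an
imaginary quadratic order. The choice of the prime and the normalization of the generator are
encoded by an embedding `Φ` of the order in `ℤ_[p]`: the prime is the one at which `Φ x` is a unit,
and among the associates of `x` the condition `Φ x ≡ 1` modulo `p` selects one. -/
structure IsNormalizedGenerator (Φ : QuadraticAlgebra ℤ a b →+* ℤ_[p]) (k : ℕ)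
    (x : QuadraticAlgebra ℤ a b) : Prop where
  norm_eq : norm x = (p : ℤ) ^ k
  dvd_map_sub_one : (p : ℤ_[p]) ∣ Φ x - 1

theorem exists_isNormalizedGenerator_trace_eq_one (Φ : QuadraticAlgebra ℤ a b →+* ℤ_[p]) {k : ℕ}
    (hk : k ≠ 0) {x : QuadraticAlgebra ℤ a b} (htr : trace x = 1) (hnorm : norm x = (p : ℤ) ^ k) :
    ∃ y, IsNormalizedGenerator Φ k y ∧ trace y = 1 := by
  have hadd : Φ x + Φ (star x) = 1 := by rw [map_add_map_star, htr, Int.cast_one]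
  have hdvd : (p : ℤ_[p]) ∣ Φ x * Φ (star x) := by
    rw [map_mul_map_star, hnorm, Int.cast_pow, Int.cast_natCast]
    exact dvd_pow_self _ hk
  rcases PadicInt.prime_p.dvd_or_dvd hdvd with h | h
  · refine ⟨star x, ⟨by rw [QuadraticAlgebra.norm_star, hnorm], ?_⟩, by rw [trace_star, htr]⟩
    rwa [← dvd_neg, neg_sub, ← hadd, add_sub_cancel_right]
  · refine ⟨x, ⟨hnorm, ?_⟩, htr⟩
    rwa [← dvd_neg, neg_sub, ← hadd, add_sub_cancel_left]

namespace IsNormalizedGenerator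

variable {Φ : QuadraticAlgebra ℤ a b →+* ℤ_[p]} {k l : ℕ} {x y : QuadraticAlgebra ℤ a b}

theorem not_dvd_map (hx : IsNormalizedGenerator Φ k x) : ¬ (p : ℤ_[p]) ∣ Φ x := fun h =>
  PadicInt.prime_p.not_dvd_one ((dvd_sub_right h).1 hx.dvd_map_sub_one)

theorem mul_star_eq (hx : IsNormalizedGenerator Φ k x) :
    x * star x = (p : QuadraticAlgebra ℤ a b) ^ k := by
  rw [← algebraMap_norm_eq_mul_star, hx.norm_eq, map_pow, map_natCast]

theorem map_mul_map_star_eq (hx : IsNormalizedGenerator Φ k x) :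
    Φ x * Φ (star x) = (p : ℤ_[p]) ^ k := by
  rw [map_mul_map_star, hx.norm_eq, Int.cast_pow, Int.cast_natCast]

theorem pow_dvd_map_star (hx : IsNormalizedGenerator Φ k x) : (p : ℤ_[p]) ^ k ∣ Φ (star x) :=
  PadicInt.prime_p.pow_dvd_of_dvd_mul_left k hx.not_dvd_map hx.map_mul_map_star_eq.symm.dvd

theorem pow (hx : IsNormalizedGenerator Φ k x) (i : ℕ) :
    IsNormalizedGenerator Φ (k * i) (x ^ i) := by
  refine ⟨by rw [map_pow, hx.norm_eq, pow_mul], hx.dvd_map_sub_one.trans ?_⟩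
  simpa using sub_dvd_pow_sub_pow (Φ x) 1 i

theorem dvd_trace_sub_one (hk : k ≠ 0) (hx : IsNormalizedGenerator Φ k x) :
    (p : ℤ) ∣ trace x - 1 := by
  rw [← pow_one (p : ℤ), ← PadicInt.pow_p_dvd_int_iff, pow_one, Int.cast_sub, Int.cast_one,
    ← map_add_map_star Φ, add_sub_right_comm]
  exact dvd_add hx.dvd_map_sub_one ((dvd_pow_self _ hk).trans hx.pow_dvd_map_star)

section Discriminant

variable (hdiscr : ¬ (p : ℤ) ∣ b ^ 2 + 4 * a)
include hdiscr

theorem exists_mul_eq (hx : IsNormalizedGenerator Φ k x) (hy : IsNormalizedGenerator Φ l y)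
    (hkl : k ≤ l) : ∃ z, IsNormalizedGenerator Φ (l - k) z ∧ x * z = y := by
  have hpk : (p : ℤ) ^ k ≠ 0 := pow_ne_zero k (mod_cast (Fact.out : p.Prime).ne_zero)
  obtain ⟨z, hz⟩ : (p : QuadraticAlgebra ℤ a b) ^ k ∣ y * star x := by
    apply pow_dvd_of_pow_dvd_map (Φ := Φ) hdiscr
    · rw [map_mul]
      exact hx.pow_dvd_map_star.mul_left _
    · rw [star_mul, star_star, map_mul]
      exact ((pow_dvd_pow _ hkl).trans hy.pow_dvd_map_star).mul_left _
  have hxz : x * z = y := by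
    apply smul_right_injective _ hpk
    simp only [zsmul_eq_mul, Int.cast_pow, Int.cast_natCast]
    linear_combination y * hx.mul_star_eq - x * hz
  refine ⟨z, ⟨mul_left_cancel₀ hpk ?_, ?_⟩, hxz⟩
  · rw [← hx.norm_eq, ← map_mul, hxz, hy.norm_eq, hx.norm_eq, pow_mul_pow_sub _ hkl]
  · refine (PadicInt.prime_p.dvd_or_dvd ?_).resolve_left hx.not_dvd_map
    rw [mul_sub_one, ← map_mul, hxz, ← sub_sub_sub_cancel_right _ _ 1]
    exact dvd_sub hy.dvd_map_sub_one hx.dvd_map_sub_one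

theorem exists_gcd (hx : IsNormalizedGenerator Φ k x) (hy : IsNormalizedGenerator Φ l y) :
    ∃ z, IsNormalizedGenerator Φ (k.gcd l) z := by
  induction k, l using Nat.gcd.induction generalizing x y with
  | H0 l => exact ⟨y, by rwa [Nat.gcd_zero_left]⟩
  | H1 k l _ ih =>
    obtain ⟨z, hz, -⟩ := (hx.pow (l / k)).exists_mul_eq hdiscr hy (Nat.mul_div_le l k)
    rw [← Nat.mod_eq_sub] at hz
    rw [Nat.gcd_rec]
    exact ih hz hx

variable (hodd : Odd p) (hneg : b ^ 2 + 4 * a < 0)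
include hodd hneg

theorem eq_one (hx : IsNormalizedGenerator Φ 0 x) : x = 1 := by
  have hmap_star : (p : ℤ_[p]) ∣ Φ (star x) - 1 := by
    refine (PadicInt.prime_p.dvd_or_dvd ?_).resolve_left hx.not_dvd_map
    rw [mul_sub_one, hx.map_mul_map_star_eq, pow_zero, ← dvd_neg, neg_sub]
    exact hx.dvd_map_sub_one
  obtain ⟨w, hw⟩ : (p : QuadraticAlgebra ℤ a b) ^ 1 ∣ x - 1 := by
    apply pow_dvd_of_pow_dvd_map (Φ := Φ) hdiscr
    · simpa using hx.dvd_map_sub_one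
    · simpa using hmap_star
  have hp3 : (2 : ℤ) < p :=
    mod_cast (Fact.out : p.Prime).two_le.lt_of_ne' (hodd.ne_two_of_dvd_nat dvd_rfl)
  rw [pow_one, ← C_natCast, C_mul_eq_smul] at hw
  have hre : x.re - 1 = p * w.re := by simpa using congrArg re hw
  have him : x.im = p * w.im := by simpa using congrArg im hw
  have hnorm := trace_sq_sub_four_mul_norm x
  rw [hx.norm_eq, pow_zero, trace_def, him] at hnorm
  have hw_im : w.im = 0 := by
    by_contra h
    have h1 : 0 < w.im ^ 2 := by positivity
    have h2 : (2 : ℤ) ^ 2 < p ^ 2 := by gcongr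
    have h3 : 4 < (p * w.im) ^ 2 := by nlinarith
    nlinarith [sq_nonneg (2 * x.re + b * (p * w.im))]
  rw [hw_im, mul_zero] at him hnorm
  have hre_sq : x.re ^ 2 = 1 := by linarith
  have hre_eq : x.re = 1 := by
    refine (sq_eq_one_iff.1 hre_sq).resolve_right fun h => ?_
    have hdvd_two : (p : ℤ) ∣ 2 := ⟨-w.re, by linarith⟩
    exact hp3.not_ge (Int.le_of_dvd two_pos hdvd_two)
  ext <;> simp [hre_eq, him]

theorem unique (hx : IsNormalizedGenerator Φ k x) (hy : IsNormalizedGenerator Φ k y) : x = y := by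
  obtain ⟨z, hz, rfl⟩ := hx.exists_mul_eq hdiscr hy le_rfl
  rw [Nat.sub_self] at hz
  rw [hz.eq_one hdiscr hodd hneg, mul_one]

theorem exists_coprime_pow (hx : IsNormalizedGenerator Φ k x)
    (hy : IsNormalizedGenerator Φ l y) :
    ∃ g z i j, IsNormalizedGenerator Φ g z ∧ i.Coprime j ∧
      (k = g * i ∧ x = z ^ i) ∧ (l = g * j ∧ y = z ^ j) := by
  obtain ⟨z, hz⟩ := hx.exists_gcd hdiscr hy
  obtain ⟨i, j, hcop, hi, hj⟩ := Nat.exists_coprime k l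
  rw [mul_comm] at hi hj
  exact ⟨k.gcd l, z, i, j, hz, hcop, ⟨hi, hx.unique hdiscr hodd hneg (hi ▸ hz.pow i)⟩,
    ⟨hj, hy.unique hdiscr hodd hneg (hj ▸ hz.pow j)⟩⟩

end Discriminant

theorem trace_eq_one_of_odd_of_trace_pow_eq_one (hodd : Odd p) (hk : k ≠ 0)
    (hx : IsNormalizedGenerator Φ k x) {i : ℕ} (hi : Odd i) (htr : trace (x ^ i) = 1) :
    trace x = 1 := by
  have hunit : IsUnit (trace x) := isUnit_of_dvd_one (htr ▸ trace_dvd_trace_pow x hi)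
  refine (Int.isUnit_iff.1 hunit).resolve_right fun hneg_one => ?_
  have hdvd_two : (p : ℤ) ∣ 2 := by simpa [hneg_one] using hx.dvd_trace_sub_one hk
  have hp_two : p = 2 :=
    (Nat.prime_dvd_prime_iff_eq Fact.out Nat.prime_two).1 (mod_cast hdvd_two)
  exact hodd.ne_two_of_dvd_nat dvd_rfl hp_two

theorem eq_one_of_trace_pow_eq_one (hodd : Odd p) (hk : k ≠ 0) (hx : IsNormalizedGenerator Φ k x)
    (htr : trace x = 1) {i : ℕ} (hi : i ≠ 0) (htri : trace (x ^ i) = 1) : i = 1 := by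
  have hstar_ne_zero : Φ (star x) ≠ 0 :=
    right_ne_zero_of_mul (hx.map_mul_map_star_eq ▸ pow_ne_zero k PadicInt.prime_p.ne_zero)
  refine eq_one_of_pow_add_pow_eq_one (c := Φ x) Fact.out PadicInt.prime_p hodd
    ((dvd_pow_self _ hk).trans hx.pow_dvd_map_star)
    (.of_prime_left PadicInt.prime_p hstar_ne_zero) ?_ hi ?_
  · rw [map_add_map_star, htr, Int.cast_one]
  · rw [← map_pow, ← map_pow, ← star_pow, map_add_map_star, htri, Int.cast_one]

theorem exponent_unique (hodd : Odd p) (hneg : b ^ 2 + 4 * a < 0)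
    (hdiscr : ¬ (p : ℤ) ∣ b ^ 2 + 4 * a) (hk : k ≠ 0) (hl : l ≠ 0)
    (hx : IsNormalizedGenerator Φ k x) (hy : IsNormalizedGenerator Φ l y)
    (hxtr : trace x = 1) (hytr : trace y = 1) : k = l := by
  obtain ⟨g, z, i, j, hz, hcop, ⟨rfl, rfl⟩, rfl, rfl⟩ :=
    hx.exists_coprime_pow hdiscr hodd hneg hy
  obtain ⟨hg, hi⟩ := mul_ne_zero_iff.1 hk
  have hj : j ≠ 0 := right_ne_zero_of_mul hl
  have hztr : trace z = 1 := by
    rcases Nat.even_or_odd i with hi_even | hi_odd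
    · have hj_odd : Odd j :=
        Nat.coprime_two_left.1 (Nat.Coprime.coprime_dvd_left hi_even.two_dvd hcop)
      exact hz.trace_eq_one_of_odd_of_trace_pow_eq_one hodd hg hj_odd hytr
    · exact hz.trace_eq_one_of_odd_of_trace_pow_eq_one hodd hg hi_odd hxtr
  rw [hz.eq_one_of_trace_pow_eq_one hodd hg hztr hi hxtr,
    hz.eq_one_of_trace_pow_eq_one hodd hg hztr hj hytr]

end IsNormalizedGenerator

end NormalizedGenerators

theorem exists_eq_one_sq_add_four_mul {D q s : ℤ} (h : 1 - 4 * q = D * s ^ 2) :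
    ∃ A : ℤ, D = 1 ^ 2 + 4 * A := by
  have hs : Odd s := by
    have hodd : Odd (D * s ^ 2) := ⟨-2 * q, by linear_combination -h⟩
    exact (Int.odd_pow' two_ne_zero).1 (Int.odd_mul.1 hodd).2
  obtain ⟨t, rfl⟩ := hs
  exact ⟨-q - D * t ^ 2 - D * t, by linear_combination -h⟩

theorem eq_of_one_sub_four_mul_prime_pow {p : ℕ} (hp : p.Prime) (hodd : Odd p) {D s t : ℤ}
    {m n : ℕ} (hm : m ≠ 0) (hn : n ≠ 0) (hs : 1 - 4 * (p : ℤ) ^ m = D * s ^ 2)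
    (ht : 1 - 4 * (p : ℤ) ^ n = D * t ^ 2) : m = n := by
  have : Fact p.Prime := ⟨hp⟩
  have hneg : D < 0 := by
    have hpos : 0 < (p : ℤ) ^ m := pow_pos (mod_cast hp.pos) m
    exact neg_of_mul_neg_left (by omega : D * s ^ 2 < 0) (sq_nonneg s)
  have hdvd : (p : ℤ) ∣ D * s ^ 2 - 1 := by
    rw [← hs, sub_sub_cancel_left, dvd_neg]
    exact (dvd_pow_self _ hm).mul_left 4
  have hdiscr : ¬ (p : ℤ) ∣ D := fun h =>
    (Nat.prime_iff_prime_int.1 hp).not_dvd_one ((dvd_sub_right (h.mul_right _)).1 hdvd)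
  have hsquare : IsSquare (D : ℤ_[p]) := isSquare_intCast_padicInt_of_mul_sq_sub_one hodd hdvd
  obtain ⟨A, rfl⟩ := exists_eq_one_sq_add_four_mul hs
  obtain ⟨Φ⟩ := nonempty_algHom_of_isSquare (R := ℤ) (a := A) (b := 1) (isUnit_two_padicInt hodd)
    (by rwa [eq_intCast])
  obtain ⟨u, hu, hunorm⟩ := exists_trace_eq_one_norm_eq hs
  obtain ⟨v, hv, hvnorm⟩ := exists_trace_eq_one_norm_eq ht
  obtain ⟨x, hx, hxtr⟩ := exists_isNormalizedGenerator_trace_eq_one Φ.toRingHom hm hu hunorm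
  obtain ⟨y, hy, hytr⟩ := exists_isNormalizedGenerator_trace_eq_one Φ.toRingHom hn hv hvnorm
  exact hx.exponent_unique hodd hneg hdiscr hm hn hy hxtr hytr

theorem stmt_2_general {K : Type*} [Field K] [CharZero K] (p : ℕ) (hp : p.Prime) (hodd : Odd p)
    (n1 n2 : ℕ) (h1 : n1 ≠ 0) (h2 : n2 ≠ 0)
    (z1 z2 : K) (hz1 : z1 ^ 2 = 1 - 4 * (p : K) ^ n1) (hz2 : z2 ^ 2 = 1 - 4 * (p : K) ^ n2)
    (heq : IntermediateField.adjoin ℚ {z1} = IntermediateField.adjoin ℚ {z2}) :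
    n1 = n2 := by
  have hmem : z2 ∈ IntermediateField.adjoin ℚ {z1} :=
    heq ▸ IntermediateField.mem_adjoin_simple_self ℚ z2
  have hnonsquare : ¬ IsSquare (1 - 4 * (p : ℚ) ^ n2) := by
    intro h
    have hpow : 1 ≤ (p : ℚ) ^ n2 := one_le_pow₀ (mod_cast hp.one_le)
    linarith [h.nonneg]
  obtain ⟨v, hv⟩ := exists_eq_sq_mul_of_mem_adjoin_simple (M := 1 - 4 * (p : ℚ) ^ n1)
    (by simpa using hz1) (by simpa using hz2) hnonsquare hmem
  obtain ⟨D, s, t, hs, ht⟩ := exists_common_mul_sq (A := ℤ) (M := 1 - 4 * (p : ℤ) ^ n1)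
    (N := 1 - 4 * (p : ℤ) ^ n2) (v := v) (by simpa using hv)
  exact eq_of_one_sub_four_mul_prime_pow hp hodd h1 h2 hs ht

/-- Let `p` be an odd prime number. If `n1` and `n2` are integers greater than `8` such that
`ℚ(√(1 − 4p^n1)) = ℚ(√(1 − 4p^n2))`, then `n1 = n2`. -/
theorem stmt_2 (p : ℕ) (hp : p.Prime) (hodd : Odd p)
    (n1 n2 : ℕ) (h1 : 8 < n1) (h2 : 8 < n2)
    (z1 z2 : ℂ) (hz1 : z1 ^ 2 = 1 - 4 * (p : ℂ) ^ n1) (hz2 : z2 ^ 2 = 1 - 4 * (p : ℂ) ^ n2)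
    (heq : IntermediateField.adjoin ℚ {z1} = IntermediateField.adjoin ℚ {z2}) :
    n1 = n2 :=
  stmt_2_general p hp hodd n1 n2 (by omega) (by omega) z1 z2 hz1 hz2 heq
end

section
/- Let p = 3. If n1 and n2 are positive odd integers with n1 ≠ 5 and n2 ≠ 5 such that ℚ(√(1 − 3^{n1})) = ℚ(√(1 − 3^{n2})) (equivalently, the squarefree parts of 1 − 3^{n1} and 1 − 3^{n2} coincide), then n1 = n2. -/
/-!
Equality of the two fields means that `3 ^ m - 1 = d * x ^ 2` and `3 ^ n - 1 = d * y ^ 2` for a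
common `d`, so `1 + x√-d` and `1 + y√-d` are primitive elements of `ℤ√(-d)` of norms `3 ^ m` and
`3 ^ n`. Descent shows that, up to sign and conjugation, both are powers of one primitive element
`w` of minimal norm `3 ^ s`. For odd `k` the real part of `w` divides that of `w ^ k`, so
`w = ±(1 + b√-d)`, and it remains to see when `(1 + b√-d) ^ k` has real part `±1`.

If `s ≥ 3`, then `3 ^ s - 1 = d * b ^ 2` has a prime factor `p ≥ 5`, and the quadratic term of the
binomial expansion dominates the later ones `p`-adically, which forces `k = 1`. If `s = 1`, then
`d = 2` and `b = ±1`; as `(1 + √-2) ^ 8 = 1 + 8(2 + 7√-2)` is `2`-adically close to `1`, in each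
residue class modulo `8` at most the least exponent survives, leaving `k = 1` and `k = 5`, the
latter coming from `(1 + √-2) ^ 5 = 1 - 11√-2`.
-/

theorem two_pow_mul_dvd_one_add_pow_sub {R : Type*} [CommRing R] {β c : R} (hc : 2 ∣ c)
    (hβ : 2 * c ∣ β ^ 2) (i m : ℕ) :
    2 ^ i * c ∣ (1 + β) ^ (2 ^ i * m) - (1 + 2 ^ i * m * β) := by
  induction i with
  | zero =>
    obtain ⟨u, hu⟩ := Polynomial.powAddExpansion 1 β m
    have hsub : (1 + β) ^ (2 ^ 0 * m) - (1 + 2 ^ 0 * m * β) = u * β ^ 2 := by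
      rw [pow_zero, one_mul, hu]
      ring
    rw [hsub, pow_zero, one_mul]
    exact ((dvd_mul_left c 2).trans hβ).mul_left u
  | succ i ih =>
    obtain ⟨e, he⟩ := ih
    obtain ⟨a, rfl⟩ := hc
    obtain ⟨b, hb⟩ := hβ
    have hsq : (1 + β) ^ (2 ^ (i + 1) * m) = (1 + 2 ^ i * m * β + 2 ^ i * (2 * a) * e) ^ 2 := by
      rw [← he, add_sub_cancel, ← pow_mul]
      ring_nf
    refine ⟨2 ^ i * m ^ 2 * b + e * (1 + 2 ^ i * m * β) + 2 ^ i * a * e ^ 2, ?_⟩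
    rw [hsq]
    linear_combination (2 ^ i * m) ^ 2 * hb

theorem two_pow_dvd_re_mul_one_add_sqrt_neg_two_pow_sub (γ : ℤ√(-2)) (i m : ℕ) :
    2 ^ i * 64 ∣ (γ * ⟨1, 1⟩ ^ (8 * (2 ^ i * m))).re -
      (γ.re + 2 ^ i * m * (16 * γ.re - 112 * γ.im)) := by
  set α : ℤ√(-2) := ⟨1, 1⟩
  set β : ℤ√(-2) := ⟨16, 56⟩
  have hα : α ^ 8 = 1 + β := rfl
  have h64 : (2 : ℤ√(-2)) ∣ 64 := ⟨32, by norm_num⟩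
  have hβ : (2 : ℤ√(-2)) * 64 ∣ β ^ 2 := ⟨⟨-47, 14⟩, rfl⟩
  have hdvd : ((2 ^ i * 64 : ℤ) : ℤ√(-2)) ∣
      γ * α ^ (8 * (2 ^ i * m)) - (γ + ((2 ^ i * m : ℤ) : ℤ√(-2)) * (γ * β)) := by
    have h := (two_pow_mul_dvd_one_add_pow_sub h64 hβ i m).mul_left γ
    rw [← hα, ← pow_mul] at h
    convert h using 1 <;> push_cast <;> ring
  have hre := ((Zsqrtd.intCast_dvd _ _).1 hdvd).1
  rw [Zsqrtd.re_sub, Zsqrtd.re_add, Zsqrtd.re_smul, Zsqrtd.re_mul γ β] at hre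
  convert hre using 4
  ring

theorem re_mul_one_add_sqrt_neg_two_pow_mod_eight (γ : ℤ√(-2)) (n : ℕ) :
    (γ * ⟨1, 1⟩ ^ (8 * n)).re % 8 = γ.re % 8 := by
  have h := two_pow_dvd_re_mul_one_add_sqrt_neg_two_pow_sub γ 0 n
  simp only [pow_zero, one_mul] at h
  have h8 : (8 : ℤ) ∣ n * (16 * γ.re - 112 * γ.im) := Dvd.dvd.mul_left (by omega) _
  omega

theorem re_mul_one_add_sqrt_neg_two_pow_ne_one {γ : ℤ√(-2)} (hre : γ.re = 1)
    (him : γ.im % 4 = 1) {n : ℕ} (hn : n ≠ 0) : (γ * ⟨1, 1⟩ ^ (8 * n)).re ≠ 1 := by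
  intro h
  obtain ⟨i, m, hm, rfl⟩ := Nat.exists_eq_two_pow_mul_odd hn
  obtain ⟨v, hv⟩ : ∃ v, γ.im = 4 * v + 1 := ⟨γ.im / 4, by omega⟩
  have hdvd := two_pow_dvd_re_mul_one_add_sqrt_neg_two_pow_sub γ i m
  have hdiff : 1 - (1 + 2 ^ i * m * (16 * 1 - 112 * (4 * v + 1))) =
      2 ^ i * (32 * (m * (14 * v + 3))) := by ring
  rw [h, hre, hv, hdiff, mul_dvd_mul_iff_left (by positivity)] at hdvd
  have hodd : Odd ((m : ℤ) * (14 * v + 3)) :=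
    ((Int.odd_coe_nat m).2 hm).mul ⟨7 * v + 1, by ring⟩
  rw [Int.odd_iff] at hodd
  omega

theorem eq_one_or_eq_five_of_isUnit_re_one_add_sqrt_neg_two_pow {k : ℕ} (hk : Odd k)
    (h : IsUnit ((⟨1, 1⟩ : ℤ√(-2)) ^ k).re) : k = 1 ∨ k = 5 := by
  obtain ⟨a, n, ha, rfl⟩ : ∃ a n, (a = 1 ∨ a = 3 ∨ a = 5 ∨ a = 7) ∧ k = a + 8 * n :=
    ⟨k % 8, k / 8, by grind, by omega⟩
  rw [pow_add, Int.isUnit_iff] at h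
  have hmod := re_mul_one_add_sqrt_neg_two_pow_mod_eight (⟨1, 1⟩ ^ a) n
  have hzero (hre : ((⟨1, 1⟩ : ℤ√(-2)) ^ a).re = 1) (him : ((⟨1, 1⟩ : ℤ√(-2)) ^ a).im % 4 = 1) :
      n = 0 := by
    by_contra hn
    have hne := re_mul_one_add_sqrt_neg_two_pow_ne_one hre him hn
    omega
  rcases ha with rfl | rfl | rfl | rfl
  · simp [hzero rfl rfl]
  · rw [show ((⟨1, 1⟩ : ℤ√(-2)) ^ 3).re = -5 from rfl] at hmod
    omega
  · simp [hzero rfl rfl]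
  · rw [show ((⟨1, 1⟩ : ℤ√(-2)) ^ 7).re = 43 from rfl] at hmod
    omega

theorem not_pow_pred_dvd_choose_two {p k : ℕ} (hp : p.Prime) (h5 : 5 ≤ p) (hk : 2 ≤ k) :
    ¬p ^ (k - 1) ∣ (2 * k).choose 2 := by
  obtain ⟨l, rfl⟩ := Nat.exists_eq_add_of_le' hk
  have hchoose : (2 * (l + 2)).choose 2 = (l + 2) * (2 * (l + 2) - 1) := by
    rw [Nat.choose_two_right, mul_assoc, Nat.mul_div_cancel_left _ two_pos]
  have hcop : (l + 2).Coprime (2 * (l + 2) - 1) := by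
    rw [show 2 * (l + 2) - 1 = l + 1 + (l + 2) by omega, Nat.coprime_add_self_right,
      Nat.coprime_comm]
    exact Nat.coprime_self_add_right.2 (Nat.coprime_one_right (l + 1))
  have hpow : 1 + (l + 1) * 4 ≤ p ^ (l + 1) :=
    calc 1 + (l + 1) * 4 ≤ 5 ^ (l + 1) :=
          one_add_le_pow_of_two_add_nonneg (a := 4) (Nat.zero_le _) (l + 1)
      _ ≤ p ^ (l + 1) := Nat.pow_le_pow_left h5 (l + 1)
  rw [hchoose, hcop.isPrimePow_dvd_mul (hp.isPrimePow.pow (by omega)),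
    show l + 2 - 1 = l + 1 by omega]
  rintro (h | h) <;> have := Nat.le_of_dvd (by omega) h <;> omega

theorem padicNorm_choose_mul_pow_lt {p m k : ℕ} [Fact p.Prime] (h5 : 5 ≤ p) {D : ℤ}
    (hD : (p : ℤ) ∣ D) (hk : 2 ≤ k) (h0 : (m.choose 2 * D : ℚ) ≠ 0) :
    padicNorm p (m.choose (2 * k) * D ^ k) < padicNorm p (m.choose 2 * D) := by
  have hp := (Fact.out : p.Prime)
  have hmul : (m.choose (2 * k) * (2 * k).choose 2 : ℚ) =
      m.choose 2 * (m - 2).choose (2 * k - 2) := by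
    exact_mod_cast Nat.choose_mul (n := m) (k := 2 * k) (s := 2) (by omega)
  have hpow : padicNorm p (D ^ (k - 1)) < padicNorm p ((2 * k).choose 2) := by
    have hle : padicNorm p ((D ^ (k - 1) : ℤ) : ℚ) ≤ (p : ℚ) ^ (-(k - 1 : ℕ) : ℤ) :=
      padicNorm.dvd_iff_norm_le.1 (by exact_mod_cast pow_dvd_pow_of_dvd hD (k - 1))
    have hlt : (p : ℚ) ^ (-(k - 1 : ℕ) : ℤ) < padicNorm p (((2 * k).choose 2 : ℤ) : ℚ) := by
      rw [← not_le, ← padicNorm.dvd_iff_norm_le]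
      exact_mod_cast not_pow_pred_dvd_choose_two hp h5 hk
    exact_mod_cast hle.trans_lt hlt
  have hpos : 0 < padicNorm p (m.choose 2 * D) :=
    (padicNorm.nonneg _).lt_of_ne' (padicNorm.nonzero h0)
  refine lt_of_mul_lt_mul_right ?_ (padicNorm.nonneg (p := p) ((2 * k).choose 2))
  calc padicNorm p (m.choose (2 * k) * D ^ k) * padicNorm p ((2 * k).choose 2)
      = padicNorm p (m.choose 2 * D) * padicNorm p ((m - 2).choose (2 * k - 2)) *
          padicNorm p (D ^ (k - 1)) := by
        obtain ⟨l, rfl⟩ := Nat.exists_eq_add_of_le' (one_le_two.trans hk)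
        simp only [← padicNorm.mul]
        congr 1
        rw [Nat.add_sub_cancel]
        linear_combination D ^ (l + 1) * hmul
    _ ≤ padicNorm p (m.choose 2 * D) * padicNorm p (D ^ (k - 1)) := by
        gcongr
        · exact padicNorm.nonneg _
        · exact mul_le_of_le_one_right (padicNorm.nonneg _) (padicNorm.of_nat (p := p) _)
    _ < padicNorm p (m.choose 2 * D) * padicNorm p ((2 * k).choose 2) := by gcongr

section RealPart

variable {d b : ℤ}

theorem zsqrtd_re_sum {ι : Type*} (s : Finset ι) (f : ι → ℤ√d) :
    (∑ i ∈ s, f i).re = ∑ i ∈ s, (f i).re :=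
  map_sum (⟨⟨Zsqrtd.re, Zsqrtd.re_zero⟩, Zsqrtd.re_add⟩ : ℤ√d →+ ℤ) f s

theorem mk_zero_pow_two_mul (k : ℕ) :
    (⟨0, b⟩ : ℤ√d) ^ (2 * k) = ((d * b ^ 2) ^ k : ℤ) := by
  have hsq : (⟨0, b⟩ : ℤ√d) ^ 2 = (d * b ^ 2 : ℤ) := by
    ext <;> simp [sq, mul_assoc]
  rw [pow_mul, hsq, Int.cast_pow]

theorem re_mk_zero_pow_of_odd {j : ℕ} (hj : Odd j) : ((⟨0, b⟩ : ℤ√d) ^ j).re = 0 := by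
  obtain ⟨k, rfl⟩ := hj
  rw [pow_succ, mk_zero_pow_two_mul, Zsqrtd.re_smul, mul_zero]

theorem re_one_mk_pow (m : ℕ) : ((⟨1, b⟩ : ℤ√d) ^ m).re =
    ∑ j ∈ Finset.range (m + 1), m.choose j * ((⟨0, b⟩ : ℤ√d) ^ j).re := by
  have hone : (⟨1, b⟩ : ℤ√d) = ⟨0, b⟩ + 1 := by ext <;> simp
  rw [hone, add_pow, zsqrtd_re_sum]
  refine Finset.sum_congr rfl fun j _ ↦ ?_
  rw [one_pow, mul_one, mul_comm]
  exact Zsqrtd.re_smul (m.choose j : ℤ) _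

theorem padicNorm_choose_mul_re_mk_zero_pow_lt {p m j : ℕ} [Fact p.Prime] (h5 : 5 ≤ p)
    (hD : (p : ℤ) ∣ d * b ^ 2) (h0 : (m.choose 2 * (d * b ^ 2 : ℤ) : ℚ) ≠ 0) (hj : 3 ≤ j) :
    padicNorm p (m.choose j * ((⟨0, b⟩ : ℤ√d) ^ j).re) <
      padicNorm p (m.choose 2 * (d * b ^ 2 : ℤ)) := by
  rcases j.even_or_odd with hj2 | hj2
  · obtain ⟨k, rfl⟩ := hj2.two_dvd
    rw [mk_zero_pow_two_mul, Zsqrtd.re_intCast, Int.cast_pow]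
    exact padicNorm_choose_mul_pow_lt h5 hD (by omega) h0
  · rw [re_mk_zero_pow_of_odd hj2, Int.cast_zero, mul_zero, padicNorm.zero]
    exact (padicNorm.nonneg _).lt_of_ne' (padicNorm.nonzero h0)

theorem padicNorm_re_one_mk_pow_sub_one {p m : ℕ} [Fact p.Prime] (h5 : 5 ≤ p)
    (hD : (p : ℤ) ∣ d * b ^ 2) (h0 : (m.choose 2 * (d * b ^ 2 : ℤ) : ℚ) ≠ 0) :
    padicNorm p ((((⟨1, b⟩ : ℤ√d) ^ m).re - 1 : ℤ) : ℚ) =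
      padicNorm p (m.choose 2 * (d * b ^ 2 : ℤ)) := by
  have hm : 2 ≤ m := by
    by_contra! h
    simp [Nat.choose_eq_zero_of_lt h] at h0
  obtain ⟨i, rfl⟩ := Nat.exists_eq_add_of_le' hm
  have htail : padicNorm p (∑ j ∈ Finset.range i,
      (i + 2).choose (j + 3) * ((⟨0, b⟩ : ℤ√d) ^ (j + 3)).re) <
        padicNorm p ((i + 2).choose 2 * (d * b ^ 2 : ℤ)) :=
    padicNorm.sum_lt'
      (fun j _ ↦ padicNorm_choose_mul_re_mk_zero_pow_lt h5 hD h0 (Nat.le_add_left 3 j))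
      ((padicNorm.nonneg _).lt_of_ne' (padicNorm.nonzero h0))
  have hsum : ((((⟨1, b⟩ : ℤ√d) ^ (i + 2)).re - 1 : ℤ) : ℚ) = ∑ j ∈ Finset.range i,
      ((i + 2).choose (j + 3) * ((⟨0, b⟩ : ℤ√d) ^ (j + 3)).re : ℚ) +
        (i + 2).choose 2 * (d * b ^ 2 : ℤ) := by
    have hsq : ((⟨0, b⟩ : ℤ√d) ^ 2).re = d * b ^ 2 := by
      have h := mk_zero_pow_two_mul (d := d) (b := b) 1
      rw [mul_one, pow_one] at h
      rw [h, Zsqrtd.re_intCast]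
    rw [re_one_mk_pow, Finset.sum_range_succ', Finset.sum_range_succ', Finset.sum_range_succ']
    simp [hsq]
  rw [hsum, padicNorm.add_eq_max_of_ne htail.ne, max_eq_right htail.le]

theorem eq_one_of_isUnit_re_one_mk_pow {p k : ℕ} (hp : p.Prime) (h5 : 5 ≤ p)
    (hD : (p : ℤ) ∣ d * b ^ 2) (hD0 : d * b ^ 2 ≠ 0) (hk : k ≠ 0)
    (h : IsUnit ((⟨1, b⟩ : ℤ√d) ^ k).re) : k = 1 := by
  by_contra hk1
  have := Fact.mk hp
  have h0 : (k.choose 2 * (d * b ^ 2 : ℤ) : ℚ) ≠ 0 :=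
    mul_ne_zero (Nat.cast_ne_zero.2 (Nat.choose_pos (by omega)).ne') (Int.cast_ne_zero.2 hD0)
  have hnorm := padicNorm_re_one_mk_pow_sub_one h5 hD h0
  rcases Int.isUnit_iff.1 h with hre | hre <;> rw [hre] at hnorm
  · rw [sub_self, Int.cast_zero, padicNorm.zero] at hnorm
    exact padicNorm.nonzero h0 hnorm.symm
  · have hlt : padicNorm p ((k.choose 2 * (d * b ^ 2) : ℤ) : ℚ) < 1 :=
      (padicNorm.int_lt_one_iff _).2 (hD.mul_left _)
    push_cast at hlt hnorm
    rw [← hnorm] at hlt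
    have h2 : (p : ℤ) ∣ -1 - 1 := (padicNorm.int_lt_one_iff _).1 (by exact_mod_cast hlt)
    have := Int.le_of_dvd two_pos (dvd_neg.1 h2)
    omega

end RealPart

theorem exists_prime_five_le_dvd {n : ℕ} (h1 : n ≠ 1) (h2 : ¬2 ∣ n) (h3 : ¬3 ∣ n) :
    ∃ p, p.Prime ∧ 5 ≤ p ∧ p ∣ n := by
  obtain ⟨p, hp, hpn⟩ := Nat.exists_prime_and_dvd h1
  have hp2 : p ≠ 2 := fun h ↦ h2 (h ▸ hpn)
  have hp3 : p ≠ 3 := fun h ↦ h3 (h ▸ hpn)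
  exact ⟨p, hp, hp.five_le_of_ne_two_of_ne_three hp2 hp3, hpn⟩

theorem exists_prime_five_le_dvd_three_pow_sub_one {s : ℕ} (hs : Odd s) (h1 : s ≠ 1) :
    ∃ p : ℕ, p.Prime ∧ 5 ≤ p ∧ (p : ℤ) ∣ 3 ^ s - 1 := by
  obtain ⟨i, rfl⟩ := hs
  have h8 : 8 ∣ 9 ^ i - 1 := by simpa only [one_pow] using Nat.sub_dvd_pow_sub_pow 9 1 i
  obtain ⟨v, hv⟩ := h8
  have h9 : 9 ≤ 9 ^ i := Nat.le_self_pow (by omega) 9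
  have hfactor : 3 ^ (2 * i + 1) = 2 * (12 * v + 1) + 1 := by
    rw [pow_succ, pow_mul, show 3 ^ 2 = 9 from rfl]
    omega
  obtain ⟨p, hp, h5, hdvd⟩ :=
    exists_prime_five_le_dvd (n := 12 * v + 1) (by omega) (by omega) (by omega)
  refine ⟨p, hp, h5, (Int.natCast_dvd_natCast.2 hdvd).trans ⟨2, ?_⟩⟩
  zify at hfactor
  rw [hfactor]
  push_cast
  ring

theorem eq_one_or_of_isUnit_re_one_mk_pow {d b : ℤ} {s k : ℕ} (hd : d < -1) (hs : Odd s)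
    (hk : Odd k) (hnorm : (⟨1, b⟩ : ℤ√d).norm = 3 ^ s) (h : IsUnit ((⟨1, b⟩ : ℤ√d) ^ k).re) :
    k = 1 ∨ s = 1 ∧ k = 5 := by
  have hD : d * b ^ 2 = -(3 ^ s - 1) := by
    rw [← hnorm, Zsqrtd.norm_def]
    ring
  rcases eq_or_ne s 1 with rfl | hs1
  · have hb : b ^ 2 = 1 := by nlinarith [sq_pos_of_ne_zero (a := b) (by rintro rfl; simp at hD)]
    obtain rfl : d = -2 := by simpa [hb] using hD
    have h11 : IsUnit ((⟨1, 1⟩ : ℤ√(-2)) ^ k).re := by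
      rcases sq_eq_one_iff.1 hb with rfl | rfl
      · exact h
      · rwa [← Zsqrtd.star_mk, ← star_pow, Zsqrtd.re_star] at h
    exact (eq_one_or_eq_five_of_isUnit_re_one_add_sqrt_neg_two_pow hk h11).imp_right (⟨rfl, ·⟩)
  · obtain ⟨p, hp, h5, hdvd⟩ := exists_prime_five_le_dvd_three_pow_sub_one hs hs1
    have hD0 : d * b ^ 2 ≠ 0 := by
      rw [hD, neg_ne_zero, sub_ne_zero]
      exact (one_lt_pow₀ (by norm_num) hs.pos.ne').ne'
    exact Or.inl (eq_one_of_isUnit_re_one_mk_pow hp h5 (hD ▸ hdvd.neg_right) hD0 hk.pos.ne' h)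

theorem re_dvd_re_pow_of_odd {d : ℤ} (x : ℤ√d) {k : ℕ} (hk : Odd k) : x.re ∣ (x ^ k).re := by
  have hdvd : (x.re : ℤ√d) ∣ x ^ k - ⟨0, x.im⟩ ^ k := by
    have hx : (x.re : ℤ√d) = x - ⟨0, x.im⟩ := by ext <;> simp
    exact hx ▸ sub_dvd_pow_sub_pow x ⟨0, x.im⟩ k
  simpa [re_mk_zero_pow_of_odd hk] using ((Zsqrtd.intCast_dvd _ _).1 hdvd).1

theorem eq_one_or_of_isUnit_re_pow {d : ℤ} {x : ℤ√d} {s k : ℕ} (hd : d < -1) (hs : Odd s)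
    (hk : Odd k) (hnorm : x.norm = 3 ^ s) (h : IsUnit (x ^ k).re) : k = 1 ∨ s = 1 ∧ k = 5 := by
  have hre : IsUnit x.re := isUnit_of_dvd_unit (re_dvd_re_pow_of_odd x hk) h
  rcases Int.isUnit_iff.1 hre with hre | hre
  · have hx : x = ⟨1, x.im⟩ := Zsqrtd.ext hre rfl
    rw [hx] at hnorm h
    exact eq_one_or_of_isUnit_re_one_mk_pow hd hs hk hnorm h
  · have hx : -x = ⟨1, -x.im⟩ := Zsqrtd.ext (by simp [hre]) rfl
    rw [← Zsqrtd.norm_neg, hx] at hnorm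
    rw [← IsUnit.neg_iff, ← Zsqrtd.re_neg, ← hk.neg_pow, hx] at h
    exact eq_one_or_of_isUnit_re_one_mk_pow hd hs hk hnorm h

theorem associated_re_of_associated {d : ℤ} (hd : d < -1) {x y : ℤ√d} (h : Associated x y) :
    Associated x.re y.re := by
  obtain ⟨u, rfl⟩ := h
  have hu : (u : ℤ√d).norm = 1 := (Zsqrtd.norm_eq_one_iff' (by omega) _).2 u.isUnit
  rw [Zsqrtd.norm_def] at hu
  have him : (u : ℤ√d).im = 0 := by
    by_contra h0
    nlinarith [sq_pos_of_ne_zero h0, sq_nonneg (u : ℤ√d).re]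
  have hre : IsUnit (u : ℤ√d).re := by
    rw [him, mul_zero, sub_zero] at hu
    exact IsUnit.of_mul_eq_one _ hu
  rw [Zsqrtd.re_mul, him, mul_zero, add_zero]
  exact (associated_mul_unit_right _ _ hre)

/-- `x` is an element of `ℤ√d` of norm `p ^ n` that is primitive, that is, not divisible by an
integer other than `±1`. -/
structure IsPrimitiveOfNormPow {d : ℤ} (p : ℤ) (n : ℕ) (x : ℤ√d) : Prop where
  norm_eq : x.norm = p ^ n
  isCoprime : IsCoprime x.re x.im

/-- `x` is a primitive element of norm `p ^ m`, where `m` is the least positive exponent for which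
`ℤ√d` has such an element. For an odd prime `p ∤ d` it generates, up to units and conjugation, all
primitive elements of norm a power of `p`. -/
structure IsMinimalOfNormPow {d : ℤ} (p : ℤ) (m : ℕ) (x : ℤ√d) : Prop extends
    IsPrimitiveOfNormPow p m x where
  ne_zero : m ≠ 0
  le_of_isPrimitive : ∀ ⦃k : ℕ⦄ ⦃z : ℤ√d⦄, k ≠ 0 → IsPrimitiveOfNormPow p k z → m ≤ k

namespace IsPrimitiveOfNormPow

variable {d p : ℤ} {m n : ℕ} {x y z : ℤ√d}

protected theorem star (hx : IsPrimitiveOfNormPow p n x) : IsPrimitiveOfNormPow p n (star x) where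
  norm_eq := (Zsqrtd.norm_conj x).trans hx.norm_eq
  isCoprime := by simpa only [Zsqrtd.re_star, Zsqrtd.im_star] using hx.isCoprime.neg_right

theorem not_dvd_im (hp : Prime p) (hn : n ≠ 0) (hx : IsPrimitiveOfNormPow p n x) : ¬p ∣ x.im := by
  intro him
  have hsq : x.re ^ 2 = x.norm + d * x.im * x.im := by rw [Zsqrtd.norm_def]; ring
  have hre : p ∣ x.re ^ 2 :=
    hsq ▸ dvd_add (hx.norm_eq ▸ dvd_pow_self p hn) (him.mul_left _)
  exact hp.not_isUnit (hx.isCoprime.isUnit_of_dvd' (hp.dvd_of_dvd_pow hre) him)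

theorem not_dvd_re (hp : Prime p) (hd : ¬p ∣ d) (hn : n ≠ 0) (hx : IsPrimitiveOfNormPow p n x) :
    ¬p ∣ x.re := by
  intro hre
  have hsq : d * (x.im * x.im) = x.re * x.re - x.norm := by rw [Zsqrtd.norm_def]; ring
  have him : p ∣ d * (x.im * x.im) :=
    hsq ▸ dvd_sub (hre.mul_left _) (hx.norm_eq ▸ dvd_pow_self p hn)
  exact hx.not_dvd_im hp hn
    ((hp.dvd_or_dvd ((hp.dvd_or_dvd him).resolve_left hd)).elim id id)

theorem dvd_of_pow_dvd_im_star_mul (hp : Prime p) (hn : n ≠ 0) (hx : IsPrimitiveOfNormPow p n x)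
    (h : p ^ n ∣ (star x * y).im) : x ∣ y := by
  have hmul : ((p ^ n : ℤ) : ℤ√d) * y = x * (star x * y) := by
    rw [← hx.norm_eq, Zsqrtd.norm_eq_mul_conj, mul_assoc]
  have hre : p ^ n ∣ (star x * y).re := by
    have him : p ^ n * y.im = x.re * (star x * y).im + x.im * (star x * y).re := by
      rw [← Zsqrtd.im_smul, hmul, Zsqrtd.im_mul]
    refine hp.pow_dvd_of_dvd_mul_left n (hx.not_dvd_im hp hn) ?_
    exact (dvd_add_right (h.mul_left _)).1 (him ▸ dvd_mul_right _ _)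
  obtain ⟨z, hz⟩ := (Zsqrtd.intCast_dvd _ _).2 ⟨hre, h⟩
  refine ⟨z, Zsqrtd.eq_of_smul_eq_smul_left (pow_ne_zero n hp.ne_zero) ?_⟩
  rw [hmul, hz, mul_left_comm]

theorem not_dvd_im_star_mul_and_dvd_im_mul (hp : Prime p) (hp2 : ¬p ∣ 2) (hd : ¬p ∣ d)
    (hm : m ≠ 0) (hn : n ≠ 0) (hx : IsPrimitiveOfNormPow p m x)
    (hy : IsPrimitiveOfNormPow p n y) : ¬(p ∣ (star x * y).im ∧ p ∣ (x * y).im) := by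
  rintro ⟨h₁, h₂⟩
  have hsum : (star x * y).im + (x * y).im = 2 * (x.re * y.im) := by
    simp only [Zsqrtd.im_mul, Zsqrtd.re_star, Zsqrtd.im_star]
    ring
  rcases hp.dvd_or_dvd (hsum ▸ dvd_add h₁ h₂) with h | h
  · exact hp2 h
  · exact (hp.dvd_or_dvd h).elim (hx.not_dvd_re hp hd hm) (hy.not_dvd_im hp hn)

theorem dvd_or_star_dvd (hp : Prime p) (hp2 : ¬p ∣ 2) (hd : ¬p ∣ d) (hm : m ≠ 0) (hmn : m ≤ n)
    (hx : IsPrimitiveOfNormPow p m x) (hy : IsPrimitiveOfNormPow p n y) :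
    x ∣ y ∨ star x ∣ y := by
  have hprod : p ^ m ∣ (star x * y).im * (x * y).im := by
    have hnorm : (star x * y).im * (x * y).im =
        x.norm * y.im ^ 2 - y.norm * x.im ^ 2 := by
      simp only [Zsqrtd.norm_def, Zsqrtd.im_mul, Zsqrtd.re_star, Zsqrtd.im_star]
      ring
    rw [hnorm, hx.norm_eq, hy.norm_eq]
    exact dvd_sub (dvd_mul_right _ _) ((pow_dvd_pow p hmn).mul_right _)
  by_cases h : p ∣ (x * y).im
  · have h' : ¬p ∣ (star x * y).im := fun h' ↦
      not_dvd_im_star_mul_and_dvd_im_mul hp hp2 hd hm (by omega) hx hy ⟨h', h⟩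
    refine Or.inr (hx.star.dvd_of_pow_dvd_im_star_mul hp hm ?_)
    rw [star_star]
    exact hp.pow_dvd_of_dvd_mul_left m h' hprod
  · exact Or.inl (hx.dvd_of_pow_dvd_im_star_mul hp hm (hp.pow_dvd_of_dvd_mul_right m h hprod))

theorem dvd_im_star_mul (hm : m ≠ 0) (hx : IsPrimitiveOfNormPow p m x) (h : x ∣ y) :
    p ∣ (star x * y).im := by
  obtain ⟨z, rfl⟩ := h
  rw [← mul_assoc, mul_comm (star x), ← Zsqrtd.norm_eq_mul_conj, Zsqrtd.im_smul, hx.norm_eq]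
  exact (dvd_pow_self p hm).mul_right _

theorem of_mul (hp : p ≠ 0) (hx : IsPrimitiveOfNormPow p m x)
    (hxz : IsPrimitiveOfNormPow p (m + n) (x * z)) : IsPrimitiveOfNormPow p n z where
  norm_eq := mul_left_cancel₀ (pow_ne_zero m hp) <| by
    rw [← hx.norm_eq, ← Zsqrtd.norm_mul, hxz.norm_eq, hx.norm_eq, pow_add]
  isCoprime := Zsqrtd.isCoprime_of_dvd_isCoprime hxz.isCoprime (dvd_mul_left z x)

theorem exists_isMinimalOfNormPow (hn : n ≠ 0) (hy : IsPrimitiveOfNormPow p n y) :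
    ∃ (m : ℕ) (x : ℤ√d), IsMinimalOfNormPow p m x := by
  classical
  have hex : ∃ m, m ≠ 0 ∧ ∃ x : ℤ√d, IsPrimitiveOfNormPow p m x := ⟨n, hn, y, hy⟩
  obtain ⟨hm, x, hx⟩ := Nat.find_spec hex
  exact ⟨Nat.find hex, x, hx, hm, fun k z hk hz ↦ Nat.find_min' hex ⟨hk, z, hz⟩⟩

end IsPrimitiveOfNormPow

namespace IsMinimalOfNormPow

variable {d p : ℤ} {m n : ℕ} {x y : ℤ√d}

protected theorem star (hx : IsMinimalOfNormPow p m x) : IsMinimalOfNormPow p m (star x) where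
  toIsPrimitiveOfNormPow := hx.toIsPrimitiveOfNormPow.star
  ne_zero := hx.ne_zero
  le_of_isPrimitive := hx.le_of_isPrimitive

theorem exists_associated_pow_of_not_star_dvd (hp : Prime p) (hp2 : ¬p ∣ 2) (hd : ¬p ∣ d)
    (hx : IsMinimalOfNormPow p m x) (hy : IsPrimitiveOfNormPow p n y) (h : ¬star x ∣ y) :
    ∃ k, n = m * k ∧ Associated y (x ^ k) := by
  have hx' := hx.toIsPrimitiveOfNormPow
  induction n using Nat.strong_induction_on generalizing y with
  | h n ih =>
    rcases eq_or_ne n 0 with rfl | hn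
    · refine ⟨0, rfl, associated_one_iff_isUnit.2 (Zsqrtd.norm_eq_one_iff.1 ?_)⟩
      rw [hy.norm_eq, pow_zero, Int.natAbs_one]
    · obtain ⟨l, rfl⟩ := Nat.exists_eq_add_of_le (hx.le_of_isPrimitive hn hy)
      obtain ⟨z, rfl⟩ :=
        (hx'.dvd_or_star_dvd hp hp2 hd hx.ne_zero (Nat.le_add_right m l) hy).resolve_right h
      have hl : l < m + l := Nat.lt_add_of_pos_left (Nat.pos_of_ne_zero hx.ne_zero)
      obtain ⟨k, rfl, hk⟩ := ih l hl (hx'.of_mul hp.ne_zero hy) fun hz ↦ h (hz.mul_left x)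
      exact ⟨k + 1, by ring, pow_succ' x k ▸ hk.mul_left x⟩

theorem exists_associated_pow (hp : Prime p) (hp2 : ¬p ∣ 2) (hd : ¬p ∣ d)
    (hx : IsMinimalOfNormPow p m x) (hn : n ≠ 0) (hy : IsPrimitiveOfNormPow p n y) :
    ∃ k, n = m * k ∧ (Associated y (x ^ k) ∨ Associated y (star (x ^ k))) := by
  have hx' := hx.toIsPrimitiveOfNormPow
  by_cases h : star x ∣ y
  · have h' : ¬star (star x) ∣ y := fun h' ↦
      hx'.not_dvd_im_star_mul_and_dvd_im_mul hp hp2 hd hx.ne_zero hn hy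
        ⟨hx'.dvd_im_star_mul hx.ne_zero (star_star x ▸ h'),
          by simpa only [star_star] using hx'.star.dvd_im_star_mul hx.ne_zero h⟩
    obtain ⟨k, hk, hassoc⟩ := hx.star.exists_associated_pow_of_not_star_dvd hp hp2 hd hy h'
    exact ⟨k, hk, Or.inr (star_pow x k ▸ hassoc)⟩
  · obtain ⟨k, hk, hassoc⟩ := hx.exists_associated_pow_of_not_star_dvd hp hp2 hd hy h
    exact ⟨k, hk, Or.inl hassoc⟩

end IsMinimalOfNormPow

theorem eq_or_eq_five_of_isMinimalOfNormPow {d : ℤ} {s n : ℕ} {x y : ℤ√d} (hd : d < -1)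
    (hd3 : ¬3 ∣ d) (hx : IsMinimalOfNormPow 3 s x) (hn : Odd n) (hy : IsPrimitiveOfNormPow 3 n y)
    (hre : IsUnit y.re) : n = s ∨ n = 5 := by
  obtain ⟨k, rfl, hassoc⟩ :=
    hx.exists_associated_pow Int.prime_three (by decide) hd3 hn.pos.ne' hy
  have hunit : IsUnit (x ^ k).re := by
    rcases hassoc with h | h
    · exact (associated_re_of_associated hd h).isUnit_iff.1 hre
    · exact (associated_re_of_associated hd h).isUnit_iff.1 hre
  obtain ⟨hs_odd, hk_odd⟩ := Nat.odd_mul.1 hn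
  rcases eq_one_or_of_isUnit_re_pow hd hs_odd hk_odd hx.norm_eq hunit with rfl | ⟨rfl, rfl⟩
  · exact Or.inl (mul_one s)
  · exact Or.inr rfl

theorem eq_of_one_add_mul_sq_eq_three_pow {d x y : ℤ} {m n : ℕ} (hm : Odd m) (hn : Odd n)
    (hm5 : m ≠ 5) (hn5 : n ≠ 5) (hx : 1 + d * x ^ 2 = 3 ^ m) (hy : 1 + d * y ^ 2 = 3 ^ n) :
    m = n := by
  have h3 : (3 : ℤ) ∣ 3 ^ m := dvd_pow_self 3 hm.pos.ne'
  have hd0 : 0 < d := by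
    have := one_lt_pow₀ (by norm_num : (1 : ℤ) < 3) hm.pos.ne'
    by_contra! hd
    nlinarith [sq_nonneg x]
  have hd1 : d ≠ 1 := by
    rintro rfl
    have hmod : 1 + (x : ZMod 3) ^ 2 = 0 := by
      rw [← hx, one_mul] at h3
      exact_mod_cast (ZMod.intCast_zmod_eq_zero_iff_dvd _ 3).2 h3
    have hne : ∀ u : ZMod 3, 1 + u ^ 2 ≠ 0 := by decide
    exact hne _ hmod
  have hd3 : ¬3 ∣ -d := fun hd ↦ by
    have := (dvd_neg.1 hd).mul_right (x ^ 2)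
    omega
  have hprim {z : ℤ} {k : ℕ} (hz : 1 + d * z ^ 2 = 3 ^ k) :
      IsPrimitiveOfNormPow 3 k (⟨1, z⟩ : ℤ√(-d)) :=
    ⟨by rw [← hz, Zsqrtd.norm_def]; ring, isCoprime_one_left⟩
  obtain ⟨s, w, hw⟩ := (hprim hx).exists_isMinimalOfNormPow hm.pos.ne'
  have hm' := eq_or_eq_five_of_isMinimalOfNormPow (by omega) hd3 hw hm (hprim hx) isUnit_one
  have hn' := eq_or_eq_five_of_isMinimalOfNormPow (by omega) hd3 hw hn (hprim hy) isUnit_one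
  omega

section AdjoinSqrt

variable {K L : Type*} [Field K] [Field L] [Algebra K L]

theorem exists_eq_add_mul_of_mem_adjoin_simple {z w : L} {c : K}
    (hz : z ^ 2 = algebraMap K L c) (hw : w ∈ IntermediateField.adjoin K {z}) :
    ∃ a b : K, w = algebraMap K L a + algebraMap K L b * z := by
  have halg : IsAlgebraic K z :=
    IsAlgebraic.of_pow two_pos (hz ▸ isAlgebraic_algebraMap c)
  rw [← IntermediateField.mem_toSubalgebra,
    IntermediateField.adjoin_simple_toSubalgebra_of_isAlgebraic halg] at hw
  induction hw using Algebra.adjoin_induction with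
  | mem x hx => exact ⟨0, 1, by simpa using hx⟩
  | algebraMap r => exact ⟨r, 0, by simp⟩
  | add x y _ _ hx hy =>
    obtain ⟨a, b, rfl⟩ := hx
    obtain ⟨a', b', rfl⟩ := hy
    exact ⟨a + a', b + b', by simp only [map_add]; ring⟩
  | mul x y _ _ hx hy =>
    obtain ⟨a, b, rfl⟩ := hx
    obtain ⟨a', b', rfl⟩ := hy
    refine ⟨a * a' + b * b' * c, a * b' + b * a', ?_⟩
    simp only [map_add, map_mul, ← hz]
    ring

theorem exists_eq_sq_mul_of_mem_adjoin_simple_s4 (h2 : (2 : K) ≠ 0) {z w : L} {c e : K}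
    (hz : z ^ 2 = algebraMap K L c) (hw : w ^ 2 = algebraMap K L e) (he : ¬IsSquare e)
    (hmem : w ∈ IntermediateField.adjoin K {z}) : ∃ b, e = b ^ 2 * c := by
  obtain ⟨a, b, rfl⟩ := exists_eq_add_mul_of_mem_adjoin_simple hz hmem
  have hsq : algebraMap K L (2 * a * b) * z = algebraMap K L (e - a ^ 2 - b ^ 2 * c) := by
    simp only [map_sub, map_mul, map_pow, map_ofNat, ← hw, ← hz]
    ring
  rcases eq_or_ne (2 * a * b) 0 with hab | hab
  · rcases (mul_eq_zero.1 hab).imp_left (mul_eq_zero.1 · |>.resolve_left h2) with rfl | rfl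
    · refine ⟨b, FaithfulSMul.algebraMap_injective K L ?_⟩
      rw [← hw, map_zero, zero_add, mul_pow, hz, map_mul, map_pow]
    · refine absurd ⟨a, FaithfulSMul.algebraMap_injective K L ?_⟩ he
      rw [← hw, map_zero, zero_mul, add_zero, map_mul, sq]
  · obtain ⟨r, rfl⟩ : ∃ r, algebraMap K L r = z :=
      ⟨(e - a ^ 2 - b ^ 2 * c) / (2 * a * b), by
        rw [map_div₀, ← hsq, mul_div_cancel_left₀ _ (by simpa using hab)]⟩
    refine absurd ⟨a + b * r, FaithfulSMul.algebraMap_injective K L ?_⟩ he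
    rw [← hw, map_mul, map_add, map_mul, sq]

end AdjoinSqrt

theorem exists_eq_mul_sq_of_eq_sq_mul {A B : ℕ} {q : ℚ} (h : (B : ℚ) = q ^ 2 * A) :
    ∃ d x y : ℕ, A = d * x ^ 2 ∧ B = d * y ^ 2 := by
  obtain ⟨d, x, rfl, hd⟩ := Nat.sq_mul_squarefree A
  obtain ⟨t, ht⟩ : ∃ t : ℚ, (B : ℚ) = t ^ 2 * d := ⟨q * x, by rw [h]; push_cast; ring⟩
  have hnum : t.num.natAbs ^ 2 * d = B * t.den ^ 2 := by
    rw [← t.num_div_den, div_pow, div_mul_eq_mul_div, eq_div_iff (by positivity)] at ht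
    zify
    rw [sq_abs]
    exact_mod_cast ht.symm
  have hden : t.den * t.den ∣ d := by
    rw [← sq]
    exact (t.reduced.symm.pow 2 2).dvd_of_dvd_mul_left (hnum ▸ dvd_mul_left _ _)
  refine ⟨d, x, t.num.natAbs, mul_comm _ _, ?_⟩
  rw [mul_comm d, hnum, Nat.isUnit_iff.1 (hd _ hden), one_pow, mul_one]

theorem stmt_4_general {L : Type*} [Field L] [Algebra ℚ L] {n1 n2 : ℕ} (ho1 : Odd n1)
    (ho2 : Odd n2) (hne1 : n1 ≠ 5) (hne2 : n2 ≠ 5) {z1 z2 : L} (hz1 : z1 ^ 2 = 1 - 3 ^ n1)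
    (hz2 : z2 ^ 2 = 1 - 3 ^ n2) (hmem : z1 ∈ IntermediateField.adjoin ℚ {z2}) : n1 = n2 := by
  have hsq : ¬IsSquare (1 - 3 ^ n1 : ℚ) := fun h ↦
    h.nonneg.not_gt (sub_neg.2 (one_lt_pow₀ (by norm_num) ho1.pos.ne'))
  have hmap (n : ℕ) : (1 - 3 ^ n : L) = algebraMap ℚ L (1 - 3 ^ n) := by
    simp only [map_sub, map_one, map_pow, map_ofNat]
  obtain ⟨q, hq⟩ : ∃ q : ℚ, 1 - 3 ^ n1 = q ^ 2 * (1 - 3 ^ n2) :=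
    exists_eq_sq_mul_of_mem_adjoin_simple_s4 two_ne_zero (hz2.trans (hmap n2)) (hz1.trans (hmap n1))
      hsq hmem
  have hcast (n : ℕ) : ((3 ^ n - 1 : ℕ) : ℚ) = 3 ^ n - 1 := by
    rw [Nat.cast_sub (Nat.one_le_pow _ _ three_pos)]; norm_cast
  obtain ⟨d, x, y, hx, hy⟩ : ∃ d x y : ℕ, 3 ^ n2 - 1 = d * x ^ 2 ∧ 3 ^ n1 - 1 = d * y ^ 2 :=
    exists_eq_mul_sq_of_eq_sq_mul (q := q) (by rw [hcast, hcast]; linear_combination -hq)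
  have hadd {n z : ℕ} (h : 3 ^ n - 1 = d * z ^ 2) : (1 : ℤ) + d * z ^ 2 = 3 ^ n := by
    have := Nat.one_le_pow n 3 three_pos
    exact_mod_cast (by omega : 1 + d * z ^ 2 = 3 ^ n)
  exact eq_of_one_add_mul_sq_eq_three_pow ho1 ho2 hne1 hne2 (hadd hy) (hadd hx)

/-- Let `p = 3`. If `n1` and `n2` are positive odd integers with `n1 ≠ 5` and `n2 ≠ 5`
such that `ℚ(√(1 − 3^n1)) = ℚ(√(1 − 3^n2))`, then `n1 = n2`. -/
theorem stmt_4 (n1 n2 : ℕ) (hpos1 : 0 < n1) (hpos2 : 0 < n2) (ho1 : Odd n1) (ho2 : Odd n2)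
    (hne1 : n1 ≠ 5) (hne2 : n2 ≠ 5)
    (z1 z2 : ℂ) (hz1 : z1 ^ 2 = 1 - (3 : ℂ) ^ n1) (hz2 : z2 ^ 2 = 1 - (3 : ℂ) ^ n2)
    (heq : IntermediateField.adjoin ℚ {z1} = IntermediateField.adjoin ℚ {z2}) :
    n1 = n2 :=
  stmt_4_general ho1 ho2 hne1 hne2 hz1 hz2 (heq ▸ IntermediateField.mem_adjoin_simple_self ℚ z1)
end

section
/- Let p be a prime with p ≡ 3 (mod 4) and 2^{p−1} ≡ 1 (mod p^2), and let q1 be a prime factor of p − 2 such that q1^{p−1} ≢ 1 (mod p^2). If n1 and n2 are positive odd composite numbers such that ℚ(√(q1^2 − p^{n1})) = ℚ(√(q1^2 − p^{n2})) (equivalently, the squarefree parts of q1^2 − p^{n1} and q1^2 − p^{n2} coincide), then n1 = n2. -/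
/-!
Write `n = n₁` and `n + 2 * t = n₂`. If the two fields coincide, then
`(p ^ n - q ^ 2) * (p ^ (n + 2 * t) - q ^ 2)` is a square, so the two factors are `d * b₁ ^ 2` and
`d * b₂ ^ 2`, and `q + b₁ √-d`, `q + b₂ √-d` have norms `p ^ n` and `p ^ (n + 2 * t)`.

* `p`-adically, powers of these two elements with a common norm must have the same real part up to
  sign, and the real part of the `(k + 1)`-st power is `(2 * q) ^ k * q` modulo the norm. Hence
  `p ^ n ∣ (2 * q) ^ (4 * t) - 1`, and since `(2 * q) ^ (p - 1) - 1` is divisible by `p` only once,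
  `p ^ (n - 1) ∣ 4 * t`. So `t` is huge compared with `n`.
* At the real place, the square root of the product lies within `q ^ 2 / p ^ t` of
  `ξ = p ^ (n + t) * √(1 - q ^ 2 / p ^ n)`, and below it. When `t` is large compared with `n`, the
  denominator of a Padé approximant of `√(1 - z)` at `z = q ^ 2 / p ^ n` gives a small positive
  integer `X` for which `X * ξ` lies less than `1 / 2` above one integer and at most `1 / 2` below
  another one; the difference of these integers is then strictly between `0` and `1`.
-/

open Finset PowerSeries

lemma coeff_one_sub_X_mul_derivative {R : Type*} [CommRing R] (f : R⟦X⟧) (n : ℕ) :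
    coeff n ((1 - X) * d⁄dX R f) = (n + 1) * coeff (n + 1) f - n * coeff n f := by
  rw [sub_mul, one_mul, map_sub, coeff_derivative]
  cases n with
  | zero => simp
  | succ n => rw [coeff_succ_X_mul, coeff_derivative]; push_cast; ring

section Binomial

variable {R : Type*} [CommRing R] [BinomialRing R]

lemma succ_mul_choose_succ (r : R) (n : ℕ) :
    (n + 1) * Ring.choose r (n + 1) = (r - n) * Ring.choose r n := by
  have h := Ring.choose_smul_choose r n.le_succ
  rw [Nat.succ_eq_add_one, Nat.choose_succ_self_right, nsmul_eq_mul, Nat.cast_succ,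
    Nat.add_sub_cancel_left, Ring.choose_one_right, mul_comm (Ring.choose r n)] at h
  exact h

lemma succ_mul_choose_add_one_succ (r : R) (n : ℕ) :
    (n + 1) * Ring.choose (r + 1) (n + 1) = (r + 1) * Ring.choose r n := by
  rw [Ring.choose_succ_succ, mul_add, succ_mul_choose_succ]
  ring

lemma choose_neg_add_one_mul_neg_one_pow (r : R) (n : ℕ) :
    Ring.choose (-(r + 1)) n * (-1) ^ n = Ring.choose (r + n) n := by
  rw [Ring.choose_neg, Units.smul_def, zsmul_eq_mul, Int.cast_negOnePow_natCast, mul_right_comm,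
    ← mul_pow, neg_one_mul, neg_neg, one_pow, one_mul, add_right_comm, add_sub_cancel_right]

/-- The formal power series `(1 - zX) ^ r`, for an exponent `r` in a binomial ring. -/
noncomputable def oneSubPow (z r : R) : R⟦X⟧ :=
  rescale (-z) (binomialSeries R r)

@[simp]
lemma coeff_oneSubPow (z r : R) (n : ℕ) :
    coeff n (oneSubPow z r) = (-z) ^ n * Ring.choose r n := by
  simp [oneSubPow, coeff_rescale]

lemma oneSubPow_add_one (z r : R) :
    oneSubPow z (r + 1) = (1 - C z * X) * oneSubPow z r := by
  have h : binomialSeries R (1 : R) = 1 + X := by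
    simpa using binomialSeries_nat (R := R) (A := R) 1
  rw [oneSubPow, oneSubPow, binomialSeries_add, h, map_mul, map_add, map_one, rescale_X]
  simp only [map_neg]
  ring

lemma derivative_oneSubPow_add_one (z r : R) :
    d⁄dX R (oneSubPow z (r + 1)) = -C (z * (r + 1)) * oneSubPow z r := by
  ext n
  rw [coeff_derivative, coeff_oneSubPow, ← map_neg, coeff_C_mul, coeff_oneSubPow]
  linear_combination (-z) ^ (n + 1) * succ_mul_choose_add_one_succ r n

lemma one_sub_mul_derivative_oneSubPow (z r : R) :
    (1 - C z * X) * d⁄dX R (oneSubPow z r) = -C (z * r) * oneSubPow z r := by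
  obtain ⟨r, rfl⟩ : ∃ t, r = t + 1 := ⟨r - 1, by ring⟩
  rw [derivative_oneSubPow_add_one, oneSubPow_add_one]
  ring

/-- The coefficient of `X ^ n` in `(1 - zX) ^ r * (1 - X) ^ (-s - 1)`, as a polynomial in `z` of
degree at most `n`. The Padé approximant of `(1 - z) ^ w` with denominator of degree `k` and
numerator of degree `l` is `padeCoeff l (k + w) k z / padeCoeff k (l - w) l z`. -/
noncomputable def padeCoeff (n : ℕ) (r s z : R) : R :=
  coeff n (oneSubPow z r * oneSubPow 1 (-(s + 1)))

lemma padeCoeff_eq_sum (n : ℕ) (r s z : R) :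
    padeCoeff n r s z = ∑ x ∈ antidiagonal n,
      Ring.choose r x.1 * Ring.choose (s + x.2) x.2 * (-z) ^ x.1 := by
  rw [padeCoeff, coeff_mul]
  refine sum_congr rfl fun x _ ↦ ?_
  rw [coeff_oneSubPow, coeff_oneSubPow, mul_comm ((-1) ^ _), choose_neg_add_one_mul_neg_one_pow]
  ring

lemma padeCoeff_zero (r s z : R) : padeCoeff 0 r s z = 1 := by
  simp [padeCoeff_eq_sum]

lemma padeCoeff_add_one_add_one (n : ℕ) (r s z : R) :
    padeCoeff (n + 1) (r + 1) (s + 1) z =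
      padeCoeff n (r + 1) (s + 1) z + padeCoeff (n + 1) r s z - z * padeCoeff n r s z := by
  have h : (1 - X) * (oneSubPow z (r + 1) * oneSubPow 1 (-(s + 1 + 1))) =
      (1 - C z * X) * (oneSubPow z r * oneSubPow 1 (-(s + 1))) := by
    rw [← sub_add_cancel (-(s + 1)) 1, oneSubPow_add_one, oneSubPow_add_one,
      show -(s + 1) - 1 = -(s + 1 + 1) by ring, map_one]
    ring
  have h' := congr(coeff (n + 1) $h)
  rw [sub_mul, sub_mul, one_mul, one_mul, map_sub, map_sub, mul_assoc, coeff_C_mul,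
    coeff_succ_X_mul, coeff_succ_X_mul] at h'
  simp only [padeCoeff]
  linear_combination h'

lemma succ_mul_padeCoeff_succ (n : ℕ) (r s z : R) :
    (n + 1) * padeCoeff (n + 1) (r + 1) (s + 1) z =
      (n + s + 2) * padeCoeff n (r + 1) (s + 1) z - (r + 1) * z * padeCoeff n r s z := by
  have hpow : oneSubPow 1 (-(s + 1)) = (1 - X) * oneSubPow 1 (-(s + 1 + 1)) := by
    rw [← sub_add_cancel (-(s + 1)) 1, oneSubPow_add_one, neg_add' (s + 1), map_one, one_mul]
  have h : (1 - X) * d⁄dX R (oneSubPow z (r + 1) * oneSubPow 1 (-(s + 1 + 1))) =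
      C (s + 2) * (oneSubPow z (r + 1) * oneSubPow 1 (-(s + 1 + 1))) -
      C (z * (r + 1)) * (oneSubPow z r * oneSubPow 1 (-(s + 1))) := by
    have hd := one_sub_mul_derivative_oneSubPow 1 (-(s + 1 + 1))
    rw [one_mul, map_one, one_mul, map_neg, neg_neg, add_assoc, one_add_one_eq_two] at hd
    rw [Derivation.leibniz, derivative_oneSubPow_add_one, smul_eq_mul, smul_eq_mul, hpow,
      add_assoc, one_add_one_eq_two]
    linear_combination oneSubPow z (r + 1) * hd
  have h' := congr(coeff n $h)
  rw [coeff_one_sub_X_mul_derivative, map_sub, coeff_C_mul, coeff_C_mul] at h'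
  simp only [padeCoeff]
  linear_combination h'

end Binomial

section PadeError

/-- The `i`-th term of the power series of `(1 - z) ^ w * padeCoeff k (l - w) l z` in `z`: for
`l : ℕ` the terms with `i ≤ l` make up the Padé numerator, those with `l < i ≤ k + l` vanish, and
the others form the error of the approximation. The parameter `l` is real because the recursion in
`k` passes from `l` to `l - 1`. -/
noncomputable def contactTerm (w : ℝ) (k : ℕ) (l z : ℝ) (i : ℕ) : ℝ :=
  Ring.choose (k + w) i * Ring.choose (k + l - i) k * (-z) ^ i

lemma succ_mul_contactTerm_zero (w : ℝ) (k : ℕ) (l z : ℝ) :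
    (k + 1) * contactTerm w (k + 1) l z 0 = (k + l + 1) * contactTerm w k l z 0 := by
  have h := succ_mul_choose_add_one_succ (k + l) k
  simp only [contactTerm, Ring.choose_zero_right, Nat.cast_zero, sub_zero, pow_zero, Nat.cast_succ]
  rw [show (k + 1 + l : ℝ) = k + l + 1 by ring]
  linear_combination h

lemma succ_mul_contactTerm_succ (w : ℝ) (k : ℕ) (l z : ℝ) (i : ℕ) :
    (k + 1) * contactTerm w (k + 1) l z (i + 1) =
      (k + l + 1) * contactTerm w k l z (i + 1) - (l - w) * z * contactTerm w k (l - 1) z i := by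
  have h := succ_mul_choose_add_one_succ (k + l - (i + 1)) k
  have hi := succ_mul_choose_succ (k + w) i
  simp only [contactTerm, Nat.cast_succ]
  rw [show (k + 1 + w : ℝ) = k + w + 1 by ring, Ring.choose_succ_succ,
    show (k + 1 + l - (i + 1) : ℝ) = k + l - (i + 1) + 1 by ring,
    show (k + (l - 1) - i : ℝ) = k + l - (i + 1) by ring]
  linear_combination (-z) ^ (i + 1) * (Ring.choose (k + w) i + Ring.choose (k + w) (i + 1)) * h
    - (-z) ^ (i + 1) * Ring.choose (k + l - (i + 1)) k * hi

lemma hasSum_choose_mul_neg_pow {z : ℝ} (hz : |z| < 1) (w : ℝ) :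
    HasSum (fun i ↦ Ring.choose w i * (-z) ^ i) ((1 - z) ^ w) := by
  have h := (Real.one_add_rpow_hasFPowerSeriesOnBall_zero (a := w)).hasSum (y := -z)
    (by simpa [enorm_eq_nnnorm, ← NNReal.coe_lt_coe] using hz)
  simpa [_root_.binomialSeries, FormalMultilinearSeries.coeff_ofScalars, sub_eq_add_neg,
    mul_comm] using h

theorem hasSum_contactTerm {z : ℝ} (hz : |z| < 1) (w : ℝ) (k : ℕ) (l : ℝ) :
    HasSum (contactTerm w k l z) ((1 - z) ^ w * padeCoeff k (l - w) l z) := by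
  induction k generalizing l with
  | zero =>
    rw [padeCoeff_zero, mul_one]
    exact (hasSum_choose_mul_neg_pow hz w).congr_fun fun i ↦ by simp [contactTerm]
  | succ k ih =>
    have htail := (hasSum_nat_add_iff' 1).2 (ih l)
    rw [sum_range_one] at htail
    have hshift := (htail.mul_left (k + l + 1 : ℝ)).sub ((ih (l - 1)).mul_left ((l - w) * z))
    simp only [← succ_mul_contactTerm_succ] at hshift
    have hrec := succ_mul_padeCoeff_succ k (l - 1 - w) (l - 1) z
    rw [show l - 1 - w + 1 = l - w by ring, sub_add_cancel] at hrec
    have hk : (k + 1 : ℝ) ≠ 0 := k.cast_add_one_ne_zero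
    rw [← hasSum_nat_add_iff' 1, sum_range_one, ← hasSum_mul_left_iff hk, mul_sub,
      succ_mul_contactTerm_zero]
    refine Eq.subst (motive := HasSum _) ?_ hshift
    linear_combination -(1 - z) ^ w * hrec

lemma choose_add_succ_mem_Icc {w : ℝ} (hw : w ∈ Set.Icc 0 1) (k : ℕ) :
    Ring.choose (k + w) (k + 1) ∈ Set.Icc 0 1 := by
  induction k with
  | zero => simpa using hw
  | succ k ih =>
    have hk : (0 : ℝ) < k + 2 := by positivity
    have h : Ring.choose (k + 1 + w) (k + 2) =
        (k + 1 + w) / (k + 2) * Ring.choose (k + w) (k + 1) := by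
      have := succ_mul_choose_add_one_succ (k + w) (k + 1)
      rw [add_right_comm (k : ℝ) w 1] at this
      field_simp
      push_cast at this
      linear_combination this
    rw [Nat.cast_succ, h]
    refine unitInterval.mul_mem (unitInterval.div_mem ?_ hk.le ?_) ih <;> linarith [hw.1, hw.2]

lemma neg_one_pow_mul_choose_mem_Icc {w : ℝ} (hw : w ∈ Set.Icc 0 1) (k j : ℕ) :
    (-1) ^ j * Ring.choose (k + w) (k + 1 + j) ∈ Set.Icc 0 1 := by
  induction j with
  | zero => simpa using choose_add_succ_mem_Icc hw k
  | succ j ih =>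
    have hk : (0 : ℝ) < k + j + 2 := by positivity
    have h : (-1) ^ (j + 1) * Ring.choose (k + w) (k + 1 + (j + 1)) =
        (j + 1 - w) / (k + j + 2) * ((-1) ^ j * Ring.choose (k + w) (k + 1 + j)) := by
      have := succ_mul_choose_succ (k + w) (k + 1 + j)
      field_simp
      push_cast at this
      rw [← add_assoc]
      linear_combination -(-1) ^ j * this
    rw [h]
    refine unitInterval.mul_mem (unitInterval.div_mem ?_ hk.le ?_) ih <;> linarith [hw.1, hw.2]

lemma sum_range_contactTerm (w : ℝ) (k l : ℕ) (z : ℝ) :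
    ∑ i ∈ range (k + l + 1), contactTerm w k l z i = padeCoeff l (k + w) k z := by
  have hvanish : ∀ i ∈ range (k + l + 1), i ∉ range (l + 1) → contactTerm w k l z i = 0 := by
    intro i hi hi'
    rw [mem_range] at hi hi'
    rw [contactTerm, ← Nat.cast_add, ← Nat.cast_sub (by omega), Ring.choose_natCast,
      Nat.choose_eq_zero_of_lt (by omega), Nat.cast_zero, mul_zero, zero_mul]
  rw [← sum_subset (range_mono (by omega)) hvanish, padeCoeff_eq_sum,
    Nat.sum_antidiagonal_eq_sum_range_succ_mk]
  refine sum_congr rfl fun i hi ↦ ?_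
  have hk : (k + l - i : ℝ) = (k + (l - i) : ℕ) := by
    rw [Nat.cast_add, Nat.cast_sub (mem_range_succ_iff.1 hi)]
    ring
  simp only [contactTerm, hk]
  simp only [← Nat.cast_add, Ring.choose_natCast]
  rw [Nat.choose_symm_add]

lemma contactTerm_add {w : ℝ} (k l : ℕ) (z : ℝ) (m : ℕ) :
    contactTerm w k l z (m + (k + l + 1)) =
      -(((-1) ^ (l + m) * Ring.choose (k + w) (k + 1 + (l + m))) *
        ((m + k).choose k * z ^ m) * z ^ (k + l + 1)) := by
  have h := choose_neg_add_one_mul_neg_one_pow (m : ℝ) k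
  rw [← Nat.cast_add, Ring.choose_natCast] at h
  rw [contactTerm, ← h, show m + (k + l + 1) = k + 1 + (l + m) by ring]
  push_cast
  rw [show (k + l - (k + 1 + (l + m)) : ℝ) = -(m + 1) by ring, neg_pow z]
  ring

lemma padeCoeff_sub_mul_mem_Icc {w z : ℝ} (hw : w ∈ Set.Icc 0 1) (hz : z ∈ Set.Ico 0 1)
    (k l : ℕ) :
    padeCoeff l (k + w) k z - (1 - z) ^ w * padeCoeff k (l - w) l z ∈
      Set.Icc 0 (z ^ (k + l + 1) / (1 - z) ^ (k + 1)) := by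
  have hz1 : |z| < 1 := by rw [abs_of_nonneg hz.1]; exact hz.2
  have hrem := ((hasSum_nat_add_iff' (k + l + 1)).2 (hasSum_contactTerm hz1 w k l)).neg
  simp only [contactTerm_add, neg_neg, sum_range_contactTerm, neg_sub] at hrem
  have hgeom := (hasSum_choose_mul_geometric_of_norm_lt_one k hz1).mul_right (z ^ (k + l + 1))
  rw [one_div_mul_eq_div] at hgeom
  have hcoeff m := neg_one_pow_mul_choose_mem_Icc hw k (l + m)
  have hz0 := hz.1
  have hterm (m : ℕ) : 0 ≤ (m + k).choose k * z ^ m := by positivity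
  refine ⟨hrem.nonneg fun m ↦ ?_, hasSum_le (fun m ↦ ?_) hrem hgeom⟩
  · exact mul_nonneg (mul_nonneg (hcoeff m).1 (hterm m)) (pow_nonneg hz0 _)
  · exact mul_le_mul_of_nonneg_right (mul_le_of_le_one_left (hterm m) (hcoeff m).2)
      (pow_nonneg hz0 _)

end PadeError

section Bounds

lemma padeCoeff_succ_zero_sub (w z : ℝ) (k : ℕ) :
    padeCoeff (k + 1) (-w) 0 z - padeCoeff k (-w) 0 z =
      Ring.choose (k + w) (k + 1) * z ^ (k + 1) := by
  have h := choose_neg_add_one_mul_neg_one_pow (w - 1) (k + 1)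
  rw [sub_add_cancel, Nat.cast_succ, show w - 1 + (k + 1) = k + w by ring] at h
  simp only [padeCoeff_eq_sum, Nat.sum_antidiagonal_eq_sum_range_succ_mk, zero_add,
    Ring.choose_natCast, Nat.choose_self]
  rw [sum_range_succ, add_sub_cancel_left, ← h, neg_pow z]
  push_cast
  ring

lemma monotone_padeCoeff {w z : ℝ} (hw : w ∈ Set.Icc 0 1) (hz : z ∈ Set.Icc 0 1) (l : ℕ) :
    Monotone fun k ↦ padeCoeff k (l - w) l z := by
  induction l with
  | zero =>
    refine monotone_nat_of_le_succ fun k ↦ sub_nonneg.1 ?_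
    simp only [Nat.cast_zero, zero_sub, padeCoeff_succ_zero_sub]
    exact mul_nonneg (choose_add_succ_mem_Icc hw k).1 (pow_nonneg hz.1 _)
  | succ l ih =>
    refine monotone_nat_of_le_succ fun k ↦ ?_
    have hpos : 1 ≤ padeCoeff k (l - w) l z := by
      simpa only [padeCoeff_zero] using ih k.zero_le
    have hstep := ih k.le_succ
    have hrec := padeCoeff_add_one_add_one k (l - w) l z
    dsimp only at hstep ⊢
    rw [Nat.cast_succ, add_sub_right_comm, hrec]
    nlinarith [hz.2]

lemma one_le_padeCoeff {w z : ℝ} (hw : w ∈ Set.Icc 0 1) (hz : z ∈ Set.Icc 0 1) (k l : ℕ) :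
    1 ≤ padeCoeff k (l - w) l z := by
  simpa only [padeCoeff_zero] using monotone_padeCoeff hw hz l k.zero_le

lemma padeCoeff_le_two_pow {w z : ℝ} (hw : w ∈ Set.Icc 0 1) (hz : z ∈ Set.Icc 0 1) (k l : ℕ) :
    padeCoeff k (l - w) l z ≤ 2 ^ (k + l) := by
  induction k generalizing l with
  | zero => exact padeCoeff_zero (l - w) (l : ℝ) z ▸ one_le_pow₀ one_le_two
  | succ k ihk =>
    induction l with
    | zero =>
      have h : Ring.choose (k + w) (k + 1) * z ^ (k + 1) ≤ 1 :=
        mul_le_one₀ (choose_add_succ_mem_Icc hw k).2 (pow_nonneg hz.1 _) (pow_le_one₀ hz.1 hz.2)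
      have hk := ihk 0
      have hk2 : (1 : ℝ) ≤ 2 ^ k := one_le_pow₀ one_le_two
      simp only [Nat.cast_zero, zero_sub, add_zero, pow_succ] at hk ⊢
      linarith [padeCoeff_succ_zero_sub w z k]
    | succ l ihl =>
      have hA : 0 ≤ z * padeCoeff k (l - w) l z :=
        mul_nonneg hz.1 (zero_le_one.trans (one_le_padeCoeff hw hz k l))
      have hk := ihk (l + 1)
      have hrec := padeCoeff_add_one_add_one k (l - w) l z
      rw [Nat.cast_succ, add_sub_right_comm] at hk ⊢
      rw [hrec]
      calc _ ≤ (2 : ℝ) ^ (k + (l + 1)) + 2 ^ (k + 1 + l) := by linarith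
        _ = 2 ^ (k + 1 + (l + 1)) := by ring

end Bounds

section Integrality

lemma four_pow_mul_choose_neg_half (n : ℕ) :
    4 ^ n * Ring.choose (-(1 / 2) : ℝ) n = (-1) ^ n * n.centralBinom := by
  induction n with
  | zero => simp
  | succ n ih =>
    have h := succ_mul_choose_succ (-(1 / 2) : ℝ) n
    have hc : ((n + 1) * (n + 1).centralBinom : ℝ) = 2 * (2 * n + 1) * n.centralBinom := by
      exact_mod_cast n.succ_mul_centralBinom_succ
    rw [← mul_right_inj' (n.cast_add_one_ne_zero : (n + 1 : ℝ) ≠ 0)]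
    linear_combination 4 ^ (n + 1) * h - (4 * n + 2) * ih - (-1) ^ (n + 1) * hc

lemma four_pow_mul_choose_sub_half_mem_range (m n : ℕ) :
    4 ^ n * Ring.choose (m - 1 / 2 : ℝ) n ∈ (Int.castRingHom ℝ).range := by
  induction m generalizing n with
  | zero => exact ⟨(-1) ^ n * n.centralBinom, by simp [← four_pow_mul_choose_neg_half]⟩
  | succ m ih =>
    cases n with
    | zero => simp
    | succ n =>
      have h : (4 ^ (n + 1) * Ring.choose ((m + 1 : ℕ) - 1 / 2 : ℝ) (n + 1)) =
          4 * (4 ^ n * Ring.choose (m - 1 / 2 : ℝ) n) +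
            4 ^ (n + 1) * Ring.choose (m - 1 / 2 : ℝ) (n + 1) := by
        rw [Nat.cast_succ, add_sub_right_comm, Ring.choose_succ_succ]
        ring
      rw [h]
      exact add_mem (mul_mem ⟨4, by simp⟩ (ih n)) (ih (n + 1))

lemma four_mul_pow_mul_padeCoeff_mem_range (n m s : ℕ) (a : ℤ) {N : ℕ} (hN : N ≠ 0) :
    4 ^ n * N ^ n * padeCoeff n (m - 1 / 2 : ℝ) s (a / N) ∈ (Int.castRingHom ℝ).range := by
  rw [padeCoeff_eq_sum, mul_sum]
  refine sum_mem fun ⟨i, j⟩ hij ↦ ?_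
  obtain rfl := mem_antidiagonal.1 hij
  have h : (4 ^ (i + j) * N ^ (i + j) *
      (Ring.choose (m - 1 / 2 : ℝ) i * Ring.choose (s + j : ℝ) j * (-(a / N)) ^ i) : ℝ) =
      (4 ^ i * Ring.choose (m - 1 / 2 : ℝ) i) *
        ((4 ^ j * N ^ j * (s + j).choose j * (-a) ^ i : ℤ) : ℝ) := by
    have hNi : ((-(a / N)) ^ i * N ^ i : ℝ) = (-a) ^ i := by
      rw [← mul_pow]
      congr 1
      field_simp
    rw [← Nat.cast_add, Ring.choose_natCast]
    push_cast
    rw [← hNi]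
    ring
  dsimp only
  rw [h]
  exact mul_mem (four_pow_mul_choose_sub_half_mem_range m i) ⟨_, rfl⟩

end Integrality

section Approximation

lemma pow_div_one_sub_pow_le {z : ℝ} (hz : z ∈ Set.Icc 0 (1 / 2)) (k m : ℕ) :
    z ^ m / (1 - z) ^ k ≤ 2 ^ k * z ^ m := by
  obtain ⟨hz0, hz1⟩ := hz
  have hpos : 0 < 1 - z := by linarith
  rw [div_le_iff₀ (by positivity), mul_right_comm, ← mul_pow]
  exact le_mul_of_one_le_left (by positivity) (one_le_pow₀ (by linarith))

lemma exists_int_pade_approx {k l a N : ℕ} (hkl : k ≤ l) (haN : 2 * a ≤ N) (hN : N ≠ 0) :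
    ∃ X Y : ℤ, 0 < X ∧ (X : ℝ) ≤ 2 ^ (k + 3 * l) * N ^ k ∧
      N ^ k * Y - √(1 - a / N) * N ^ l * X ∈
        Set.Icc 0 (2 ^ (k + 2 * l + 1) * a ^ (k + l + 1) / N : ℝ) := by
  have hN0 : (0 : ℝ) < N := by positivity
  have hhalf : (a / N : ℝ) ≤ 1 / 2 := by
    rw [div_le_div_iff₀ hN0 two_pos, one_mul, mul_comm]
    exact_mod_cast haN
  have hz0 : (0 : ℝ) ≤ a / N := by positivity
  have hw : (1 / 2 : ℝ) ∈ Set.Icc 0 1 := by norm_num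
  have hz : (a / N : ℝ) ∈ Set.Icc 0 1 := ⟨hz0, by linarith⟩
  obtain ⟨X, hX⟩ := four_mul_pow_mul_padeCoeff_mem_range k l l a hN
  obtain ⟨Y, hY⟩ := four_mul_pow_mul_padeCoeff_mem_range l (k + 1) k a hN
  have herr := padeCoeff_sub_mul_mem_Icc hw ⟨hz0, by linarith⟩ k l
  have hpos := one_le_padeCoeff hw hz k l
  have hle := padeCoeff_le_two_pow hw hz k l
  rw [Nat.cast_succ, show (k + 1 - 1 / 2 : ℝ) = k + 1 / 2 by ring] at hY
  rw [← Real.sqrt_eq_rpow] at herr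
  simp only [eq_intCast, Int.cast_natCast] at hX hY
  set A := padeCoeff k (l - 1 / 2 : ℝ) l (a / N)
  set B := padeCoeff l (k + 1 / 2 : ℝ) k (a / N)
  have h4 : (4 : ℝ) ^ l = 4 ^ (l - k) * 4 ^ k := by rw [← pow_add, Nat.sub_add_cancel hkl]
  have h4l : (4 : ℝ) ^ l = 2 ^ (2 * l) := by rw [pow_mul]; norm_num
  have hX' : ((4 ^ (l - k) * X : ℤ) : ℝ) = 4 ^ l * N ^ k * A := by
    push_cast
    rw [hX, h4]
    ring
  refine ⟨4 ^ (l - k) * X, Y, ?_, ?_, ?_⟩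
  · have : (0 : ℝ) < 4 ^ l * N ^ k * A := by positivity
    exact_mod_cast hX' ▸ this
  · calc _ = 2 ^ (2 * l) * N ^ k * A := by rw [hX', h4l]
      _ ≤ 2 ^ (2 * l) * N ^ k * 2 ^ (k + l) := by gcongr
      _ = 2 ^ (k + 3 * l) * N ^ k := by ring
  · have hscale : N ^ k * Y - √(1 - a / N) * N ^ l * ((4 ^ (l - k) * X : ℤ) : ℝ) =
        4 ^ l * N ^ (k + l) * (B - √(1 - a / N) * A) := by
      rw [hX', hY]
      ring
    rw [hscale]
    refine ⟨mul_nonneg (by positivity) herr.1, ?_⟩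
    calc _ ≤ 4 ^ l * N ^ (k + l) * (2 ^ (k + 1) * (a / N : ℝ) ^ (k + l + 1)) := by
          gcongr
          exact herr.2.trans (pow_div_one_sub_pow_le ⟨hz0, hhalf⟩ _ _)
      _ = 2 ^ (k + 2 * l + 1) * a ^ (k + l + 1) / N := by
          rw [div_pow, pow_succ (N : ℝ), h4l]
          field_simp
          ring

lemma sqrt_approx_bounds {N T a c : ℝ} (ha : 0 < a) (haN : a < N) (hT : 0 < T) (hc : 0 ≤ c)
    (h : c ^ 2 = (N - a) * (N * T ^ 2 - a)) :
    N * T * √(1 - a / N) - c ∈ Set.Ioc 0 (a / T) := by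
  have hN : 0 < N := ha.trans haN
  have hz1 : a / N < 1 := (div_lt_one hN).2 haN
  set R := √(1 - a / N)
  have hRsq : R ^ 2 = 1 - a / N := Real.sq_sqrt (by linarith)
  have hR1 : R ≤ 1 := Real.sqrt_le_one.2 (by linarith [div_pos ha hN])
  have hR0 : 0 < R := Real.sqrt_pos.2 (by linarith)
  have hNR : N * R ^ 2 = N - a := by rw [hRsq]; field_simp
  have hdiff : (N * T * R - c) * (N * T * R + c) = (N - a) * a := by
    linear_combination N * T ^ 2 * hNR - h
  have hpos : 0 < N * T * R - c := pos_of_mul_pos_left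
    (hdiff ▸ mul_pos (sub_pos.2 haN) ha) (by positivity)
  refine ⟨hpos, (le_div_iff₀ hT).2 (le_of_mul_le_mul_left ?_ (sub_pos.2 haN))⟩
  calc (N - a) * ((N * T * R - c) * T) = (N * T * R - c) * (N * T * R ^ 2) := by
        rw [← hNR]; ring
    _ ≤ (N * T * R - c) * (N * T * R + c) := by
        gcongr
        nlinarith [mul_pos (mul_pos hN hT) hR0]
    _ = (N - a) * a := hdiff

lemma exists_int_sqrt_approx {k l a N T : ℕ} (hkl : k ≤ l) (haN : 2 * a ≤ N) (hN : N ≠ 0)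
    (hdvd : N ^ l ∣ T * N ^ (k + 1))
    (h₁ : 2 ^ (k + 2 * l + 2) * a ^ (k + l + 1) * T ≤ N ^ l) :
    ∃ X Y : ℤ, 0 < X ∧ (X : ℝ) ≤ 2 ^ (k + 3 * l) * N ^ k ∧
      Y - N * T * √(1 - a / N) * X ∈ Set.Icc (0 : ℝ) (1 / 2) := by
  obtain ⟨X, Y, hX0, hX, hY⟩ := exists_int_pade_approx hkl haN hN
  obtain ⟨u, hu⟩ := hdvd
  have hu' : (T * N ^ (k + 1) : ℝ) = N ^ l * u := by exact_mod_cast hu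
  have h₁' : (2 ^ (k + 2 * l + 2) * a ^ (k + l + 1) * T : ℝ) ≤ N ^ l := by exact_mod_cast h₁
  have hscale : N ^ k * (((u * Y : ℤ) : ℝ) - N * T * √(1 - a / N) * X) =
      u * (N ^ k * Y - √(1 - a / N) * N ^ l * X) := by
    push_cast
    linear_combination -√(1 - a / N) * X * hu'
  refine ⟨X, u * Y, hX0, hX, ?_, ?_⟩
  · exact nonneg_of_mul_nonneg_right (hscale ▸ mul_nonneg u.cast_nonneg hY.1) (by positivity)
  · refine le_of_mul_le_mul_left ?_ (by positivity : 0 < (N : ℝ) ^ l * N ^ k)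
    calc N ^ l * N ^ k * (((u * Y : ℤ) : ℝ) - N * T * √(1 - a / N) * X)
        = N ^ l * u * (N ^ k * Y - √(1 - a / N) * N ^ l * X) := by
          linear_combination N ^ l * hscale
      _ ≤ N ^ l * u * (2 ^ (k + 2 * l + 1) * a ^ (k + l + 1) / N) := by gcongr; exact hY.2
      _ = N ^ k * (2 ^ (k + 2 * l + 1) * a ^ (k + l + 1) * T) := by
        rw [← hu']
        field_simp
        ring
      _ = N ^ k * (2 ^ (k + 2 * l + 2) * a ^ (k + l + 1) * T) * (1 / 2) := by ring
      _ ≤ N ^ k * N ^ l * (1 / 2) := by gcongr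
      _ = N ^ l * N ^ k * (1 / 2) := by ring

theorem not_isSquare_sub_mul_mul_sq_sub {k l a N T : ℕ} (hkl : k ≤ l) (ha : 0 < a) (haN : 2 * a ≤ N)
    (hdvd : N ^ l ∣ T * N ^ (k + 1))
    (h₁ : 2 ^ (k + 2 * l + 2) * a ^ (k + l + 1) * T ≤ N ^ l)
    (h₂ : 2 ^ (k + 3 * l + 1) * a * N ^ k < T) :
    ¬ IsSquare (((N - a) * (N * T ^ 2 - a) : ℤ)) := by
  rintro ⟨c, hc⟩
  rw [← Int.natAbs_mul_self' c] at hc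
  generalize c.natAbs = c at hc
  obtain ⟨X, Y, hX0, hX, hY⟩ := exists_int_sqrt_approx hkl haN (by omega) hdvd h₁
  have hT : (0 : ℝ) < T := by exact_mod_cast h₂.pos
  have hX0' : (0 : ℝ) < X := by exact_mod_cast hX0
  have hc' : (c : ℝ) ^ 2 = (N - a) * (N * T ^ 2 - a) := by
    rw [sq]
    exact_mod_cast hc.symm
  have hδ := sqrt_approx_bounds (by exact_mod_cast ha) (by exact_mod_cast (by omega : a < N))
    hT c.cast_nonneg hc'
  have hδX : (N * T * √(1 - a / N) - c) * X < 1 / 2 :=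
    calc (N * T * √(1 - a / N) - c) * X ≤ a / T * (2 ^ (k + 3 * l) * N ^ k) := by
          gcongr
          exact hδ.2
      _ < 1 / 2 := by
        have : (2 ^ (k + 3 * l + 1) * a * N ^ k : ℝ) < T := by exact_mod_cast h₂
        rw [pow_succ] at this
        rw [div_mul_eq_mul_div, div_lt_iff₀ hT]
        linarith
  have hpos : (0 : ℝ) < Y - c * X := by linarith [hY.1, mul_pos hδ.1 hX0']
  have hlt : (Y - c * X : ℝ) < 1 := by linarith [hY.2]
  have hpos' : 0 < Y - c * X := by exact_mod_cast hpos
  have hlt' : Y - c * X < 1 := by exact_mod_cast hlt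
  omega

lemma two_pow_le_pow {p e m : ℕ} (hp : 16 ≤ p) (h : e ≤ 4 * m) : 2 ^ e ≤ p ^ m :=
  calc 2 ^ e ≤ 2 ^ (4 * m) := Nat.pow_le_pow_right two_pos h
    _ = 16 ^ m := pow_mul 2 4 m
    _ ≤ p ^ m := Nat.pow_le_pow_left hp m

lemma exists_pade_exponents {n t : ℕ} (hn : 9 ≤ n) (ht : 16 * n ≤ t) :
    ∃ k l m₁ m₂ : ℕ, k ≤ l ∧ n * l ≤ t + n * (k + 1) ∧
      k + 2 * l + 2 ≤ 4 * m₁ ∧ m₁ + 2 * (k + l + 1) + t ≤ n * l ∧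
      k + 3 * l + 1 ≤ 4 * m₂ ∧ m₂ + 2 + n * k ≤ t := by
  -- Up to lower order terms: `k` is a proper fraction of `t / n`, and `l = k + t / n`.
  obtain ⟨s, r, hr, rfl⟩ : ∃ s r, r < n ∧ n * s + r = t :=
    ⟨t / n, t % n, Nat.mod_lt _ (by omega), Nat.div_add_mod t n⟩
  have hs : 16 ≤ s := by
    have : n * 16 < n * (s + 1) := by rw [mul_add]; omega
    exact Nat.lt_succ_iff.1 (lt_of_mul_lt_mul_left this n.zero_le)
  obtain ⟨k, hk, hk'⟩ : ∃ k, 4 * k ≤ 3 * s ∧ 3 * s < 4 * k + 4 := ⟨3 * s / 4, by omega, by omega⟩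
  have hnk : 4 * (n * k) ≤ 3 * (n * s) := by nlinarith
  have hk9 : 9 * k ≤ n * k := Nat.mul_le_mul_right k hn
  have hs9 : 9 * s ≤ n * s := Nat.mul_le_mul_right s hn
  refine ⟨k, k + s + 1, (3 * k + 2 * s + 7) / 4, (4 * k + 3 * s + 7) / 4, ?_⟩
  simp only [mul_add]
  omega

theorem not_isSquare_pow_sub_sq_mul_of_sixteen_mul_le {p q n t : ℕ} (hp : 16 ≤ p) (hq : 0 < q)
    (hqp : q < p) (hn : 9 ≤ n) (ht : 16 * n ≤ t) :
    ¬ IsSquare (((p ^ n - q ^ 2) * (p ^ (n + 2 * t) - q ^ 2) : ℤ)) := by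
  have hp0 : 0 < p := by omega
  obtain ⟨k, l, m₁, m₂, hkl, hdvd, hm₁, h₁, hm₂, h₂⟩ := exists_pade_exponents hn ht
  have haN : 2 * q ^ 2 ≤ p ^ n :=
    calc 2 * q ^ 2 ≤ p * p ^ 2 := by gcongr; omega
      _ = p ^ 3 := (pow_succ' p 2).symm
      _ ≤ p ^ n := Nat.pow_le_pow_right hp0 (by omega)
  have h := not_isSquare_sub_mul_mul_sq_sub (k := k) (l := l) (a := q ^ 2) (N := p ^ n) (T := p ^ t)
    hkl (by positivity) haN ?_ ?_ ?_
  · push_cast at h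
    rwa [pow_add, pow_mul']
  · rw [← pow_mul, ← pow_mul, ← pow_add]
    exact pow_dvd_pow p hdvd
  · calc 2 ^ (k + 2 * l + 2) * (q ^ 2) ^ (k + l + 1) * p ^ t
        ≤ p ^ m₁ * (p ^ 2) ^ (k + l + 1) * p ^ t := by
          refine Nat.mul_le_mul_right _ (Nat.mul_le_mul (two_pow_le_pow hp hm₁) ?_)
          gcongr
      _ = p ^ (m₁ + 2 * (k + l + 1) + t) := by ring
      _ ≤ (p ^ n) ^ l := by
          rw [← pow_mul]
          exact Nat.pow_le_pow_right hp0 h₁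
  · calc 2 ^ (k + 3 * l + 1) * q ^ 2 * (p ^ n) ^ k < p ^ m₂ * p ^ 2 * (p ^ n) ^ k := by
          refine Nat.mul_lt_mul_of_pos_right ?_ (by positivity)
          refine Nat.mul_lt_mul_of_le_of_lt (two_pow_le_pow hp hm₂) ?_ (by positivity)
          gcongr
      _ = p ^ (m₂ + 2 + n * k) := by rw [pow_add, pow_add, pow_mul]
      _ ≤ p ^ t := Nat.pow_le_pow_right hp0 h₂

end Approximation

section Gap

lemma norm_dvd_re_pow_sub {d : ℤ} (γ : ℤ√d) (k : ℕ) :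
    γ.norm ∣ (γ ^ (k + 1)).re - (2 * γ.re) ^ k * γ.re := by
  have htrace : γ - ((2 * γ.re : ℤ) : ℤ√d) = -star γ := by
    ext
    · simp only [Zsqrtd.re_sub, Zsqrtd.re_intCast, Zsqrtd.re_neg, Zsqrtd.re_star]
      ring
    · simp
  have hdvd : (γ.norm : ℤ√d) ∣ γ ^ (k + 1) - ((2 * γ.re) ^ k : ℤ) * γ := by
    rw [Zsqrtd.norm_eq_mul_conj, pow_succ', mul_comm _ γ, ← mul_sub, Int.cast_pow]
    exact mul_dvd_mul_left γ (neg_dvd.1 (htrace ▸ sub_dvd_pow_sub_pow _ _ k))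
  have hre := ((Zsqrtd.intCast_dvd _ _).1 hdvd).1
  rwa [Zsqrtd.re_sub, Zsqrtd.re_smul] at hre

lemma im_eq_zero_of_norm_eq_sq {d Q : ℤ} {γ : ℤ√d} (hd : d ≤ -2) (hQ : Q ≠ 0)
    (hγ : γ.norm = Q ^ 2) (hdvd : Q ∣ γ.im) : γ.im = 0 := by
  obtain ⟨v, hv⟩ := hdvd
  rw [Zsqrtd.norm_def, hv] at hγ
  by_contra him
  have hv0 : v ≠ 0 := by
    rintro rfl
    exact him (hv.trans (mul_zero Q))
  have hQ2 : 0 < Q ^ 2 := by positivity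
  have hv2 : 0 < v ^ 2 := by positivity
  nlinarith [mul_pos hQ2 hv2, sq_nonneg γ.re]

lemma mul_im_mul_im_mul_star {d : ℤ} (γ₁ γ₂ : ℤ√d) :
    d * ((γ₁ * γ₂).im * (γ₁ * star γ₂).im) = γ₂.norm * γ₁.re ^ 2 - γ₁.norm * γ₂.re ^ 2 := by
  simp only [Zsqrtd.norm_def, Zsqrtd.im_mul, Zsqrtd.re_star, Zsqrtd.im_star]
  ring

lemma not_dvd_mul_im {d p : ℤ} {γ : ℤ√d} (hp : Prime p) (hγ : p ∣ γ.norm) (hre : ¬ p ∣ γ.re) :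
    ¬ p ∣ d * γ.im := fun h ↦ hre <| hp.dvd_of_dvd_pow (n := 2) <| by
  rw [show γ.re ^ 2 = γ.norm + d * γ.im * γ.im by rw [Zsqrtd.norm_def]; ring]
  exact dvd_add hγ (h.mul_right _)

lemma re_sq_eq_re_sq_of_norm_eq_pow {d p : ℤ} {M : ℕ} {γ₁ γ₂ : ℤ√d} (hp : Prime p)
    (hp2 : ¬ p ∣ 2) (hM : M ≠ 0) (hd : d ≤ -2) (h₁ : γ₁.norm = p ^ M) (h₂ : γ₂.norm = p ^ M)
    (hre₁ : ¬ p ∣ γ₁.re) (hre₂ : ¬ p ∣ γ₂.re) : γ₁.re ^ 2 = γ₂.re ^ 2 := by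
  have hQ : p ^ M ≠ 0 := pow_ne_zero _ hp.ne_zero
  have hdim : ¬ p ∣ d * γ₂.im := not_dvd_mul_im hp (h₂ ▸ dvd_pow_self p hM) hre₂
  have hcop {x : ℤ} (hx : ¬ p ∣ x) : IsCoprime (p ^ M) x :=
    (hp.irreducible.coprime_iff_not_dvd.2 hx).pow_left
  have hprod := mul_im_mul_im_mul_star γ₁ γ₂
  rw [h₁, h₂, ← mul_sub] at hprod
  have hdvd : p ^ M ∣ (γ₁ * γ₂).im * (γ₁ * star γ₂).im :=
    (hcop fun h ↦ hdim (h.mul_right _)).dvd_of_dvd_mul_left (Dvd.intro _ hprod.symm)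
  have hsub : (γ₁ * γ₂).im - (γ₁ * star γ₂).im = 2 * (γ₁.re * γ₂.im) := by
    simp only [Zsqrtd.im_mul, Zsqrtd.re_star, Zsqrtd.im_star]
    ring
  have hone : ¬ p ∣ (γ₁ * γ₂).im ∨ ¬ p ∣ (γ₁ * star γ₂).im := by
    by_contra! h
    rcases hp.dvd_or_dvd (hsub ▸ dvd_sub h.1 h.2) with h | h
    · exact hp2 h
    · exact (hp.dvd_or_dvd h).elim hre₁ fun h ↦ hdim (h.mul_left _)
  have hzero : (γ₁ * γ₂).im * (γ₁ * star γ₂).im = 0 := by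
    rcases hone with h | h
    · rw [im_eq_zero_of_norm_eq_sq hd hQ _ ((hcop h).dvd_of_dvd_mul_left hdvd), mul_zero]
      rw [Zsqrtd.norm_mul, Zsqrtd.norm_conj, h₁, h₂, sq]
    · rw [im_eq_zero_of_norm_eq_sq hd hQ _ ((hcop h).dvd_of_dvd_mul_right hdvd), zero_mul]
      rw [Zsqrtd.norm_mul, h₁, h₂, sq]
  rw [hzero, mul_zero, zero_eq_mul] at hprod
  exact sub_eq_zero.1 (hprod.resolve_left hQ)

lemma pow_dvd_two_mul_pow_sub_one {d p q : ℤ} {n m : ℕ} {γ₁ γ₂ : ℤ√d} (hp : Prime p)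
    (hpq : ¬ p ∣ 2 * q) (hn : n ≠ 0) (hd : d ≤ -2) (hre₁ : γ₁.re = q) (hre₂ : γ₂.re = q)
    (h₁ : γ₁.norm = p ^ n) (h₂ : γ₂.norm = p ^ (n + m)) : p ^ n ∣ (2 * q) ^ (2 * m) - 1 := by
  obtain ⟨j, rfl⟩ := Nat.exists_eq_add_one_of_ne_zero hn
  have c₁ := norm_dvd_re_pow_sub γ₁ (j + m)
  have c₂ := norm_dvd_re_pow_sub γ₂ j
  rw [hre₁, h₁] at c₁
  rw [hre₂, h₂] at c₂
  have hq (i : ℕ) : ¬ p ∣ (2 * q) ^ i * q := fun h ↦ (hp.dvd_or_dvd h).elim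
    (fun h ↦ hpq (hp.dvd_of_dvd_pow h)) fun h ↦ hpq (h.mul_left 2)
  have hnd {i e : ℕ} {x : ℤ} (he : e ≠ 0) (h : p ^ e ∣ x - (2 * q) ^ i * q) : ¬ p ∣ x := fun hx ↦
    hq i ((dvd_sub_right hx).1 ((dvd_pow_self p he).trans h))
  have hnorm (γ : ℤ√d) (e : ℕ) : (γ ^ e).norm = γ.norm ^ e := map_pow Zsqrtd.normMonoidHom γ e
  have hsq := re_sq_eq_re_sq_of_norm_eq_pow (γ₁ := γ₁ ^ (j + m + 1)) (γ₂ := γ₂ ^ (j + 1))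
    (M := (j + 1) * (j + m + 1)) hp (fun h ↦ hpq (h.mul_right q)) (by positivity) hd
    (by rw [hnorm, h₁, ← pow_mul]) (by rw [hnorm, h₂]; ring)
    (hnd hn c₁) (hnd (by omega) c₂)
  have m₁ := (Int.modEq_iff_dvd.2 c₁).pow 2
  have m₂ := (Int.modEq_iff_dvd.2 ((pow_dvd_pow p (Nat.le_add_right _ m)).trans c₂)).pow 2
  rw [hsq] at m₁
  have hdvd : p ^ (j + 1) ∣ ((2 * q) ^ j * q) ^ 2 * ((2 * q) ^ (2 * m) - 1) := by
    convert (m₂.trans m₁.symm).dvd using 1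
    ring
  exact ((hp.irreducible.coprime_iff_not_dvd.2 (hq j)).pow).dvd_of_dvd_mul_left hdvd

lemma pow_dvd_of_pow_dvd_pow_sub_one {p n m : ℕ} {a : ℤ} (hp : p.Prime) (hodd : Odd p)
    (ha : ¬ (p : ℤ) ∣ a) (hw : ¬ (p : ℤ) ^ 2 ∣ a ^ (p - 1) - 1)
    (h : (p : ℤ) ^ (n + 1) ∣ a ^ m - 1) : p ^ n ∣ m := by
  have hpi := Nat.prime_iff_prime_int.1 hp
  have hfermat : (p : ℤ) ∣ a ^ (p - 1) - 1 :=
    (Int.ModEq.pow_card_sub_one_eq_one hp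
      (hpi.irreducible.coprime_iff_not_dvd.2 ha).symm).symm.dvd
  have hlte := Int.emultiplicity_pow_sub_pow hp hodd (x := a ^ (p - 1)) (y := 1) hfermat
    (fun h ↦ ha (hpi.dvd_of_dvd_pow h)) m
  have hone : emultiplicity (p : ℤ) (a ^ (p - 1) - 1) = 1 :=
    (emultiplicity_eq_coe (n := 1)).2 ⟨by rwa [pow_one], hw⟩
  have hdvd : (p : ℤ) ^ (n + 1) ∣ (a ^ (p - 1)) ^ m - 1 ^ m := by
    rw [one_pow, ← pow_mul, mul_comm, pow_mul]
    exact h.trans (sub_one_dvd_pow_sub_one _ _)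
  rw [pow_dvd_iff_le_emultiplicity, hlte, hone, Nat.cast_add, Nat.cast_one, add_comm] at hdvd
  exact pow_dvd_iff_le_emultiplicity.2 ((ENat.add_le_add_iff_left (by simp)).1 hdvd)

lemma exists_squarefree_mul_sq (a : ℤ) : ∃ d x : ℤ, Squarefree d ∧ a = d * x ^ 2 := by
  obtain ⟨d, x, h, hd⟩ := Nat.sq_mul_squarefree a.natAbs
  have h' : (a.natAbs : ℤ) = d * x ^ 2 := by
    rw [← h]
    push_cast
    ring
  rcases a.natAbs_eq with ha | ha
  · exact ⟨d, x, Int.squarefree_natCast.2 hd, ha.trans h'⟩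
  · refine ⟨-d, x, Int.squarefree_natAbs.1 ?_, by rw [ha, h', neg_mul]⟩
    rwa [Int.natAbs_neg, Int.natAbs_natCast]

lemma exists_eq_mul_sq_of_isSquare_mul {a b : ℤ} (ha : a ≠ 0) (h : IsSquare (a * b)) :
    ∃ d x y : ℤ, a = d * x ^ 2 ∧ b = d * y ^ 2 := by
  obtain ⟨d, x, hd, rfl⟩ := exists_squarefree_mul_sq a
  obtain ⟨c, hc⟩ := h
  have hx : x ≠ 0 := fun hx ↦ ha (by simp [hx])
  obtain ⟨e, rfl⟩ : x ∣ c := (Int.pow_dvd_pow_iff two_ne_zero).1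
    ⟨d * b, by rw [sq c, ← hc]; ring⟩
  have he : d * b = e ^ 2 := mul_left_cancel₀ (pow_ne_zero 2 hx) (by linear_combination hc)
  obtain ⟨y, rfl⟩ : d ∣ e := (hd.dvd_pow_iff_dvd two_ne_zero).1 ⟨b, he.symm⟩
  exact ⟨d, x, y, rfl, mul_left_cancel₀ hd.ne_zero (by linear_combination he)⟩

lemma sq_add_sq_ne_pow {p n : ℕ} (hmod : p % 4 = 3) (hn : Odd n) (x y : ℤ) :
    x ^ 2 + y ^ 2 ≠ p ^ n := fun h ↦ by
  have hp : (p : ZMod 4) = -1 := by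
    rw [← ZMod.natCast_mod, hmod]
    rfl
  have hsum : ∀ u v : ZMod 4, u ^ 2 + v ^ 2 ≠ -1 := by decide
  apply hsum x y
  rw [← hn.neg_one_pow, ← hp]
  exact_mod_cast congrArg (Int.cast : ℤ → ZMod 4) h

lemma pow_dvd_two_mul_pow_sub_one_of_isSquare {p q n m : ℕ} (hp : p.Prime) (hmod : p % 4 = 3)
    (hpq : ¬ p ∣ 2 * q) (hn : Odd n) (hlt : q ^ 2 < p ^ n)
    (hsq : IsSquare (((p ^ n - q ^ 2) * (p ^ (n + m) - q ^ 2) : ℤ))) :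
    (p : ℤ) ^ n ∣ (2 * q) ^ (2 * m) - 1 := by
  have hpos : (0 : ℤ) < p ^ n - q ^ 2 := sub_pos.2 (by exact_mod_cast hlt)
  obtain ⟨d, b₁, b₂, h₁, h₂⟩ := exists_eq_mul_sq_of_isSquare_mul hpos.ne' hsq
  have hd0 : 0 < d := pos_of_mul_pos_left (h₁ ▸ hpos) (sq_nonneg b₁)
  have hd1 : d ≠ 1 := by
    rintro rfl
    exact sq_add_sq_ne_pow hmod hn q b₁ (by linear_combination -h₁)
  refine pow_dvd_two_mul_pow_sub_one (d := -d) (γ₁ := ⟨q, b₁⟩) (γ₂ := ⟨q, b₂⟩)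
    (Nat.prime_iff_prime_int.1 hp) (by exact_mod_cast hpq) hn.pos.ne' (by omega) rfl rfl ?_ ?_
  · rw [Zsqrtd.norm_def]
    linear_combination -h₁
  · rw [Zsqrtd.norm_def]
    linear_combination -h₂

lemma sixteen_mul_le_of_pow_dvd {p k t : ℕ} (hp : 16 ≤ p) (hodd : Odd p) (hk : 2 ≤ k) (ht : 0 < t)
    (h : p ^ k ∣ 2 * (2 * t)) : 16 * (k + 1) ≤ t := by
  have hcop : (p ^ k).Coprime 2 := hodd.coprime_two_right.pow_left k
  have hle : p ^ k ≤ t :=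
    Nat.le_of_dvd ht (hcop.dvd_of_dvd_mul_left (hcop.dvd_of_dvd_mul_left h))
  obtain ⟨j, rfl⟩ := Nat.exists_eq_add_of_le' hk
  have hj : j < 16 ^ j := Nat.lt_pow_self (by norm_num)
  have hpow : 16 ^ (j + 2) ≤ p ^ (j + 2) := Nat.pow_le_pow_left hp _
  rw [pow_add] at hpow
  omega

theorem not_isSquare_pow_sub_sq_mul {p q n t : ℕ} (hp : p.Prime) (hmod : p % 4 = 3)
    (hp16 : 16 ≤ p) (hq : 0 < q) (hqp : q < p) (hnw : ¬ (2 * q) ^ (p - 1) ≡ 1 [MOD p ^ 2])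
    (hn : 9 ≤ n) (hno : Odd n) (ht : 0 < t) :
    ¬ IsSquare (((p ^ n - q ^ 2) * (p ^ (n + 2 * t) - q ^ 2) : ℤ)) := by
  intro hsq
  have hodd : Odd p := Nat.odd_iff.2 (by omega)
  have hpq : ¬ p ∣ 2 * q := fun h ↦
    Nat.not_dvd_of_pos_of_lt hq hqp (hodd.coprime_two_right.dvd_of_dvd_mul_left h)
  have hlt : q ^ 2 < p ^ n :=
    (Nat.pow_lt_pow_left hqp two_ne_zero).trans_le (Nat.pow_le_pow_right hp.pos (by omega))
  have hdvd := pow_dvd_two_mul_pow_sub_one_of_isSquare hp hmod hpq hno hlt hsq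
  obtain ⟨k, rfl⟩ := Nat.exists_eq_add_of_le' hno.pos
  refine not_isSquare_pow_sub_sq_mul_of_sixteen_mul_le hp16 hq hqp hn ?_ hsq
  refine sixteen_mul_le_of_pow_dvd hp16 hodd (by omega) ht ?_
  refine pow_dvd_of_pow_dvd_pow_sub_one hp hodd (by exact_mod_cast hpq) (fun h ↦ hnw ?_) hdvd
  exact ((Nat.modEq_iff_dvd).2 (by exact_mod_cast h)).symm

end Gap

section QuadraticFields

open IntermediateField

variable {K L : Type*} [Field K] [Field L] [Algebra K L] {x y : L} {r s : K}

lemma exists_eq_add_mul_of_mem_adjoin (hx : x ^ 2 = algebraMap K L r) (hy : y ∈ K⟮x⟯) :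
    ∃ u v : K, y = algebraMap K L u + algebraMap K L v * x := by
  have hint : IsIntegral K x := by
    refine ⟨Polynomial.X ^ 2 - Polynomial.C r, Polynomial.monic_X_pow_sub_C r two_ne_zero, ?_⟩
    simp [hx]
  rw [← mem_toSubalgebra, adjoin_simple_toSubalgebra_of_isAlgebraic hint.isAlgebraic] at hy
  induction hy using Algebra.adjoin_induction with
  | mem z hz => exact ⟨0, 1, by rw [Set.mem_singleton_iff.1 hz]; simp⟩
  | algebraMap s => exact ⟨s, 0, by simp⟩
  | add z w _ _ hz hw =>
    obtain ⟨u, v, rfl⟩ := hz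
    obtain ⟨u', v', rfl⟩ := hw
    exact ⟨u + u', v + v', by simp only [map_add]; ring⟩
  | mul z w _ _ hz hw =>
    obtain ⟨u, v, rfl⟩ := hz
    obtain ⟨u', v', rfl⟩ := hw
    refine ⟨u * u' + v * v' * r, u * v' + v * u', ?_⟩
    simp only [map_add, map_mul]
    linear_combination algebraMap K L v * algebraMap K L v' * hx

lemma isSquare_mul_of_adjoin_eq (h2 : (2 : K) ≠ 0) (hx : x ^ 2 = algebraMap K L r)
    (hy : y ^ 2 = algebraMap K L s) (h : K⟮x⟯ = K⟮y⟯) : IsSquare (r * s) := by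
  suffices ∃ w : K, x * y = algebraMap K L w by
    obtain ⟨w, hw⟩ := this
    refine ⟨w, (algebraMap K L).injective ?_⟩
    rw [map_mul, map_mul, ← hx, ← hy, ← hw]
    ring
  obtain ⟨u, v, rfl⟩ := exists_eq_add_mul_of_mem_adjoin hx (h ▸ mem_adjoin_simple_self K y)
  by_cases hxK : ∃ c : K, x = algebraMap K L c
  · obtain ⟨c, rfl⟩ := hxK
    exact ⟨c * (u + v * c), by simp only [map_mul, map_add]⟩
  by_cases hv : v = 0
  · obtain ⟨u', v', hx'⟩ := exists_eq_add_mul_of_mem_adjoin hy (h ▸ mem_adjoin_simple_self K x)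
    exact absurd ⟨u' + v' * u, by simpa [hv] using hx'⟩ hxK
  by_cases hu : u = 0
  · refine ⟨v * r, ?_⟩
    rw [hu, map_zero, zero_add, map_mul, ← hx]
    ring
  have huv : algebraMap K L (2 * u * v) ≠ 0 :=
    (map_ne_zero _).2 (mul_ne_zero (mul_ne_zero h2 hu) hv)
  refine absurd ⟨(s - u ^ 2 - v ^ 2 * r) / (2 * u * v), ?_⟩ hxK
  rw [map_div₀, eq_div_iff huv]
  simp only [map_sub, map_mul, map_pow, map_ofNat]
  linear_combination hy - algebraMap K L v ^ 2 * hx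

end QuadraticFields

theorem stmt_5_general {L : Type*} [Field L] [Algebra ℚ L] {p q n₁ n₂ : ℕ} {z₁ z₂ : L}
    (hp : p.Prime) (hmod : p % 4 = 3) (hp16 : 16 ≤ p) (hq : 0 < q) (hqp : q < p)
    (hnw : ¬ (2 * q) ^ (p - 1) ≡ 1 [MOD p ^ 2]) (h9₁ : 9 ≤ n₁) (h9₂ : 9 ≤ n₂)
    (ho₁ : Odd n₁) (ho₂ : Odd n₂) (hz₁ : z₁ ^ 2 = (q : L) ^ 2 - (p : L) ^ n₁)
    (hz₂ : z₂ ^ 2 = (q : L) ^ 2 - (p : L) ^ n₂)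
    (heq : IntermediateField.adjoin ℚ {z₁} = IntermediateField.adjoin ℚ {z₂}) : n₁ = n₂ := by
  wlog hle : n₁ ≤ n₂ generalizing n₁ n₂ z₁ z₂
  · exact (this h9₂ h9₁ ho₂ ho₁ hz₂ hz₁ heq.symm (by omega)).symm
  by_contra hne
  obtain ⟨t, rfl⟩ : ∃ t, n₂ = n₁ + 2 * t := by
    rw [Nat.odd_iff] at ho₁ ho₂
    exact ⟨(n₂ - n₁) / 2, by omega⟩
  have hcast (n : ℕ) : algebraMap ℚ L ((q ^ 2 - p ^ n : ℤ) : ℚ) = (q : L) ^ 2 - (p : L) ^ n := by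
    simp only [Int.cast_sub, Int.cast_pow, Int.cast_natCast, map_sub, map_pow, map_natCast]
  have hsq : IsSquare (((q ^ 2 - p ^ n₁ : ℤ) : ℚ) * ((q ^ 2 - p ^ (n₁ + 2 * t) : ℤ) : ℚ)) :=
    isSquare_mul_of_adjoin_eq two_ne_zero (hz₁.trans (hcast _).symm) (hz₂.trans (hcast _).symm) heq
  rw [← Int.cast_mul, Rat.isSquare_intCast_iff, ← neg_mul_neg, neg_sub, neg_sub] at hsq
  exact not_isSquare_pow_sub_sq_mul hp hmod hp16 hq hqp hnw h9₁ ho₁ (by omega) hsq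

lemma sixteen_le_of_two_pow_modEq_one {p : ℕ} (hp : p.Prime) (hmod : p % 4 = 3)
    (hw : 2 ^ (p - 1) ≡ 1 [MOD p ^ 2]) : 16 ≤ p := by
  by_contra! hlt
  interval_cases p <;> first
    | omega
    | norm_num [Nat.ModEq] at hw

lemma not_two_mul_pow_modEq_one {m q e : ℕ} (hw : 2 ^ e ≡ 1 [MOD m])
    (hq : ¬ q ^ e ≡ 1 [MOD m]) : ¬ (2 * q) ^ e ≡ 1 [MOD m] := fun h ↦ hq <| by
  rw [mul_pow] at h
  simpa only [one_mul] using (hw.mul_right (q ^ e)).symm.trans h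

lemma nine_le_of_odd_of_not_prime {n : ℕ} (ho : Odd n) (h1 : 1 < n) (hn : ¬ n.Prime) :
    9 ≤ n := by
  by_contra! hlt
  rw [Nat.odd_iff] at ho
  interval_cases n <;> first | omega | exact hn (by norm_num)

/-- Let `p` be a prime with `p ≡ 3 (mod 4)` and `2^(p−1) ≡ 1 (mod p^2)`, and let `q1` be a
prime factor of `p − 2` such that `q1^(p−1) ≢ 1 (mod p^2)`. If `n1` and `n2` are positive odd
composite numbers such that `ℚ(√(q1^2 − p^n1)) = ℚ(√(q1^2 − p^n2))`, then `n1 = n2`. -/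
theorem stmt_5 (p : ℕ) (hp : p.Prime) (hmod : p % 4 = 3)
    (hw : 2 ^ (p - 1) ≡ 1 [MOD p ^ 2])
    (q1 : ℕ) (hq1 : q1.Prime) (hq1dvd : q1 ∣ p - 2)
    (hq1nw : ¬ (q1 ^ (p - 1) ≡ 1 [MOD p ^ 2]))
    (n1 n2 : ℕ) (hpos1 : 0 < n1) (hpos2 : 0 < n2) (ho1 : Odd n1) (ho2 : Odd n2)
    (hc1 : 1 < n1 ∧ ¬ n1.Prime) (hc2 : 1 < n2 ∧ ¬ n2.Prime)
    (z1 z2 : ℂ) (hz1 : z1 ^ 2 = (q1 : ℂ) ^ 2 - (p : ℂ) ^ n1)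
    (hz2 : z2 ^ 2 = (q1 : ℂ) ^ 2 - (p : ℂ) ^ n2)
    (heq : IntermediateField.adjoin ℚ {z1} = IntermediateField.adjoin ℚ {z2}) :
    n1 = n2 := by
  have hp16 := sixteen_le_of_two_pow_modEq_one hp hmod hw
  have hqp : q1 < p := (Nat.le_of_dvd (by omega) hq1dvd).trans_lt (by omega)
  exact stmt_5_general hp hmod hp16 hq1.pos hqp (not_two_mul_pow_modEq_one hw hq1nw)
    (nine_le_of_odd_of_not_prime ho1 hc1.1 hc1.2) (nine_le_of_odd_of_not_prime ho2 hc2.1 hc2.2)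
    ho1 ho2 hz1 hz2 heq
end
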